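/- There exist universal constants C₁, C₂, C₃ > 0 such that the following holds. Let M ≥ 257 be an integer, Δ ≥ 4/(M−1), and let μ be an atomic measure on 𝕋 with minimum separation Δ(μ) ≥ Δ. Let y = 𝓕_M μ + z with ‖z‖_2 ≤ ε for some ε > 0, and let ν be any atomic measure on 𝕋 with ‖y − 𝓕_M ν‖_2 ≤ ε and ‖ν‖_TV ≤ ‖μ‖_TV (in particular, any atomic solution of min ‖ν'‖_TV subject to ‖y − 𝓕_M ν'‖_2 ≤ ε). Then 𝓔_1^M(μ,ν) ≤ C₁ε, 𝓔_2^M(μ,ν) ≤ C₂ M^{−2} ε, and 𝓔_3^M(μ,ν) ≤ C₃ε. -/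

import Mathlib

open scoped Real
open Complex

set_option linter.unusedVariables false

noncomputable section

/-- Wrap-around distance on `ℝ` (distance to the nearest integer). -/
def distT (t : ℝ) : ℝ := ⨅ n : ℤ, |t - (n : ℝ)|

/-- Euclidean norm of a complex vector. -/
def norm2 {n : ℕ} (y : Fin n → ℂ) : ℝ := Real.sqrt (∑ i, ‖y i‖ ^ 2)

/-- Total variation norm of the atomic measure with amplitudes `a`. -/
def tvNorm {R : ℕ} (a : Fin R → ℂ) : ℝ := ∑ j, ‖a j‖

/-- First `M` Fourier coefficients of the atomic measure `∑ j, a j • δ_{t j}`. -/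
def fourierCoeffs (M : ℕ) {R : ℕ} (a : Fin R → ℂ) (t : Fin R → ℝ) : Fin M → ℂ :=
  fun k => ∑ j, a j * Complex.exp (-2 * (Real.pi : ℂ) * Complex.I * ((k : ℕ) : ℂ) * ((t j : ℝ) : ℂ))

/-- The function `w(t) = ∑_{k<λ} β^{-k} e^{-2πikt}`. -/
def wFun (β : ℝ) (lam : ℕ) (t : ℝ) : ℂ :=
  ∑ k ∈ Finset.range lam, ((β : ℂ))⁻¹ ^ k * Complex.exp (-2 * (Real.pi : ℂ) * Complex.I * (k : ℂ) * (t : ℂ))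

/-- Condensation matrix `V = [I_m, β⁻¹ I_m, …, β^{-(λ-1)} I_m]`. -/
def Vmat (β : ℝ) (m lam : ℕ) : Matrix (Fin m) (Fin (lam * m)) ℂ :=
  Matrix.of fun i j => if (j : ℕ) % m = (i : ℕ) then ((β : ℂ))⁻¹ ^ ((j : ℕ) / m) else 0

/-- Noise-shaping matrix `H` with `1` on the diagonal and `-β` on the `m`-th subdiagonal. -/
def Hmat (β : ℝ) (m M : ℕ) : Matrix (Fin M) (Fin M) ℂ :=
  Matrix.of fun j k => if (j : ℕ) = (k : ℕ) then 1 else if (j : ℕ) = (k : ℕ) + m then -(β : ℂ) else 0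

/-- `𝒵_K = {-K+1, -K+3, …, K-1}`. -/
def ZK (K : ℕ) : Set ℤ := {n | ∃ k : ℕ, k < K ∧ n = -(K : ℤ) + 1 + 2 * (k : ℤ)}

/-- The Cartesian alphabet `𝒜 = δ(𝒵_K + i𝒵_K)`. -/
def alphabet (K : ℕ) (δ : ℝ) : Set ℂ :=
  {z | ∃ a b : ℤ, a ∈ ZK K ∧ b ∈ ZK K ∧ z = (δ : ℂ) * ((a : ℂ) + (b : ℂ) * Complex.I)}

/-- `L` is a Lipschitz bound for `φ` with respect to the wrap-around distance. -/
def LipBnd (φ : ℝ → ℂ) (L : ℝ) : Prop := ∀ s t : ℝ, ‖φ s - φ t‖ ≤ L * distT (s - t)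

/-- Lipschitz seminorm `|φ|_Lip` with respect to the wrap-around distance. -/
def lipSemi (φ : ℝ → ℂ) : ℝ := sInf {L : ℝ | 0 ≤ L ∧ LipBnd φ L}

/-- Sup norm of `φ`. -/
def supNorm (φ : ℝ → ℂ) : ℝ := sSup {x : ℝ | ∃ t : ℝ, x = ‖φ t‖}

/-- Lipschitz norm `‖φ‖_Lip = max(‖φ‖_∞, |φ|_Lip)`. -/
def lipNorm (φ : ℝ → ℂ) : ℝ := max (supNorm φ) (lipSemi φ)

/-- Dual Lipschitz norm `‖ρ‖_{Lip*}` of the atomic measure `ρ = ∑ j, u j • δ_{r j}`. -/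
def lipStar {R : ℕ} (u : Fin R → ℂ) (r : Fin R → ℝ) : ℝ :=
  sSup {x : ℝ | ∃ φ : ℝ → ℂ, lipNorm φ ≤ 1 ∧ x = ‖∑ j, u j * φ (r j)‖}

/-- `𝓔_Lip(ρ,ν)` for atomic measures. -/
def ELip {R S : ℕ} (u : Fin R → ℂ) (r : Fin R → ℝ) (v : Fin S → ℂ) (s : Fin S → ℝ) : ℝ :=
  sSup {x : ℝ | ∃ φ : ℝ → ℂ, lipNorm φ ≤ 1 ∧
    x = ‖(∑ j, u j * φ (r j)) - (∑ k, v k * φ (s k))‖}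

open scoped Classical in
/-- The neighborhood index set `𝓘_j^M`. -/
def nearIdx {R S : ℕ} (r : Fin R → ℝ) (s : Fin S → ℝ) (M : ℕ) (j : Fin R) : Finset (Fin S) :=
  Finset.univ.filter fun k => distT (r j - s k) ≤ 0.3298 / ((M : ℝ) - 1)

open scoped Classical in
/-- The residual index set `𝓘_0^M`. -/
def farIdx {R S : ℕ} (r : Fin R → ℝ) (s : Fin S → ℝ) (M : ℕ) : Finset (Fin S) :=
  Finset.univ.filter fun k => ∀ j : Fin R, k ∉ nearIdx r s M j

/-- Amplitude error `𝓔_1^M(ρ,ν)`. -/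
def E1 {R S : ℕ} (u : Fin R → ℂ) (r : Fin R → ℝ) (v : Fin S → ℂ) (s : Fin S → ℝ) (M : ℕ) : ℝ :=
  ⨆ j : Fin R, ‖u j - ∑ k ∈ nearIdx r s M j, v k‖

/-- Support error `𝓔_2^M(ρ,ν)`. -/
def E2 {R S : ℕ} (u : Fin R → ℂ) (r : Fin R → ℝ) (v : Fin S → ℂ) (s : Fin S → ℝ) (M : ℕ) : ℝ :=
  ∑ j : Fin R, ∑ k ∈ nearIdx r s M j, ‖v k‖ * distT (r j - s k) ^ 2

/-- Spurious-atom error `𝓔_3^M(ρ,ν)`. -/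
def E3 {R S : ℕ} (u : Fin R → ℂ) (r : Fin R → ℝ) (v : Fin S → ℂ) (s : Fin S → ℝ) (M : ℕ) : ℝ :=
  ∑ k ∈ farIdx r s M, ‖v k‖

/-- Mixed `ℓ∞ + ℓ²` error `𝓔^π_{∞,2}(ρ,ν)` for a permutation `π`. -/
def EInf2 {S : ℕ} (u : Fin S → ℂ) (r : Fin S → ℝ) (v : Fin S → ℂ) (s : Fin S → ℝ)
    (σ : Equiv.Perm (Fin S)) : ℝ :=
  (⨆ j, distT (r j - s (σ j))) +
    Real.sqrt (∑ j, ‖u j - v (σ j)‖ ^ 2) / Real.sqrt (∑ j, ‖u j‖ ^ 2)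

end

open scoped Real
open Complex

lemma aux_lb {a b y : ℝ} (ha : 0 < a) (hb : b < 1) (hy : y ∈ Set.Ioo a b) (m : ℤ) :
    min a (1 - b) / 2 * (|(m : ℝ)| + 1) ≤ |y - m| := by
  obtain ⟨h1, h2⟩ := hy
  have hm1 := min_le_left a (1 - b)
  have hm2 := min_le_right a (1 - b)
  have hpos : 0 < min a (1 - b) := lt_min ha (by linarith)
  set c := min a (1 - b)
  rcases le_or_gt 1 m with hm | hm
  · have hm' : (1 : ℝ) ≤ m := by exact_mod_cast hm
    rw [abs_of_nonneg (by linarith : (0 : ℝ) ≤ m), abs_sub_comm, abs_of_nonneg (by linarith)]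
    nlinarith
  · have hm' : (m : ℝ) ≤ 0 := by exact_mod_cast (by omega : m ≤ 0)
    rw [abs_of_nonpos hm', abs_of_nonneg (by linarith)]
    nlinarith

lemma aux_summable (k : ℕ) (hk : 2 ≤ k) (c : ℝ) :
    Summable fun m : ℤ => c / (|(m : ℝ)| + 1) ^ k := by
  have h0 : Summable fun n : ℕ => c / ((n : ℝ) + 1) ^ k := by
    have := (summable_nat_add_iff 1).2 (Real.summable_nat_pow_inv.2 (by omega : 1 < k))
    have := this.mul_left c
    refine this.congr fun n => ?_
    push_cast; rw [div_eq_mul_inv]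
  apply Summable.of_nat_of_neg
  · refine h0.congr fun n => ?_
    simp
  · refine h0.congr fun n => ?_
    simp

lemma aux_summable_pow {x : ℝ} (hx : x ∈ Set.Ioo (0 : ℝ) 1) (k : ℕ) (hk : 2 ≤ k) :
    Summable fun m : ℤ => 1 / (x - m) ^ k := by
  obtain ⟨h1, h2⟩ := hx
  have hy : x ∈ Set.Ioo (x / 2) ((1 + x) / 2) := ⟨by linarith, by linarith⟩
  set c := min (x / 2) (1 - (1 + x) / 2) / 2 with hc
  have hcpos : 0 < c := by
    have : 0 < min (x / 2) (1 - (1 + x) / 2) := lt_min (by linarith) (by linarith)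
    positivity
  refine Summable.of_norm_bounded (aux_summable k hk (1 / c ^ k)) fun m => ?_
  have := aux_lb (by linarith) (by linarith) hy m
  rw [Real.norm_eq_abs, abs_div, abs_one, abs_pow, div_div, ← mul_pow]
  gcongr

/-- derivative of the lattice sums -/
lemma aux_deriv_pow {x : ℝ} (hx : x ∈ Set.Ioo (0 : ℝ) 1) (k : ℕ) (hk : 2 ≤ k) :
    HasDerivAt (fun z : ℝ => ∑' m : ℤ, 1 / (z - m) ^ k)
      (∑' m : ℤ, (-k : ℝ) * (1 / (x - m) ^ (k + 1))) x := by
  obtain ⟨h1, h2⟩ := id hx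
  have hy : x ∈ Set.Ioo (x / 2) ((1 + x) / 2) := ⟨by linarith, by linarith⟩
  set c := min (x / 2) (1 - (1 + x) / 2) / 2 with hc
  have hcpos : 0 < c := by
    have : 0 < min (x / 2) (1 - (1 + x) / 2) := lt_min (by linarith) (by linarith)
    positivity
  refine hasDerivAt_tsum_of_isPreconnected (u := fun m : ℤ => (k / c ^ (k + 1)) / (|(m : ℝ)| + 1) ^ (k + 1))
    (aux_summable (k + 1) (by omega) _) (t := Set.Ioo (x / 2) ((1 + x) / 2)) isOpen_Ioo
    isPreconnected_Ioo (g' := fun (m : ℤ) (y : ℝ) => (-k : ℝ) * (1 / (y - m) ^ (k + 1))) ?_ ?_ hy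
    (aux_summable_pow hx k hk) hy
  · intro m y hym
    have := aux_lb (by linarith) (by linarith) hym m
    have hne : y - m ≠ 0 := by
      have : 0 < |y - m| := lt_of_lt_of_le (by positivity) this
      exact abs_pos.1 this
    have h : HasDerivAt (fun z : ℝ => ((z - m) ^ k)⁻¹) _ y :=
      (((hasDerivAt_id y).sub_const (m : ℝ)).pow k).inv (by simpa using pow_ne_zero k hne)
    simp only [one_div]
    refine h.congr_deriv ?_
    obtain ⟨j, rfl⟩ : ∃ j, k = j + 1 := ⟨k - 1, by omega⟩
    simp
    field_simp
    ring
  · intro m y hym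
    have := aux_lb (by linarith) (by linarith) hym m
    rw [Real.norm_eq_abs, abs_mul, abs_neg, Nat.abs_cast, abs_div, abs_one, abs_pow, div_div, ← mul_pow, mul_one_div]
    gcongr

lemma cot_real {x : ℝ} (hx : x ∈ Set.Ioo (0 : ℝ) 1) :
    π * (Real.cos (π * x) / Real.sin (π * x)) - 1 / x =
      ∑' n : ℕ, (1 / (x - (n + 1)) + 1 / (x + (n + 1))) := by
  have hz : (x : ℂ) ∈ Complex.integerComplement := by
    rintro ⟨n, hn⟩
    have : (n : ℝ) = x := by exact_mod_cast hn
    obtain ⟨h1, h2⟩ := hx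
    rw [← this] at h1 h2
    have h1' : 0 < n := by exact_mod_cast h1
    have h2' : n < 1 := by exact_mod_cast h2
    omega
  have := cot_series_rep' hz
  rw [Complex.cot] at this
  apply Complex.ofReal_injective
  push_cast
  rw [← this]

lemma sin_pos_of_Ioo {x : ℝ} (hx : x ∈ Set.Ioo (0 : ℝ) 1) : 0 < Real.sin (π * x) := by
  apply Real.sin_pos_of_pos_of_lt_pi
  · have := hx.1; positivity
  · have := hx.2; nlinarith [Real.pi_pos]

lemma hasDerivAt_sin_pi (x : ℝ) : HasDerivAt (fun y => Real.sin (π * y)) (π * Real.cos (π * x)) x := by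
  have := ((hasDerivAt_id x).const_mul π).sin
  simpa [mul_comm] using this
lemma hasDerivAt_cos_pi (x : ℝ) : HasDerivAt (fun y => Real.cos (π * y)) (-π * Real.sin (π * x)) x := by
  have := ((hasDerivAt_id x).const_mul π).cos
  simpa [mul_comm] using this

lemma A2 {x : ℝ} (hx : x ∈ Set.Ioo (0 : ℝ) 1) :
    ∑' m : ℤ, 1 / (x - m) ^ 2 = π ^ 2 / Real.sin (π * x) ^ 2 := by
  obtain ⟨h1, h2⟩ := id hx
  have hs := (sin_pos_of_Ioo hx).ne'
  have hy : x ∈ Set.Ioo (x / 2) ((1 + x) / 2) := ⟨by linarith, by linarith⟩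
  set c := min (x / 2) (1 - (1 + x) / 2) / 2 with hc
  have hcpos : 0 < c := by
    have : 0 < min (x / 2) (1 - (1 + x) / 2) := lt_min (by linarith) (by linarith)
    positivity
  have hsum := aux_summable_pow hx 2 le_rfl
  have hs1 : Summable fun n : ℕ => 1 / (x - (n + 1)) ^ 2 := by
    have : Function.Injective (fun n : ℕ => ((n : ℤ) + 1)) := fun a b h => by simpa using h
    simpa [Function.comp_def] using hsum.comp_injective this
  have hs2 : Summable fun n : ℕ => 1 / (x + (n + 1)) ^ 2 := by
    have : Function.Injective (fun n : ℕ => (-((n : ℤ) + 1))) := fun a b h => by simpa using h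
    have h := hsum.comp_injective this
    refine h.congr fun n => ?_
    simp only [Function.comp]
    push_cast
    ring
  have hlb1 : ∀ y ∈ Set.Ioo (x / 2) ((1 + x) / 2), ∀ n : ℕ, c * ((n : ℝ) + 1) ≤ |y - (n + 1)| := by
    intro y hym n
    have := aux_lb (by linarith) (by linarith) hym ((n : ℤ) + 1)
    push_cast at this
    rw [abs_of_nonneg (by positivity : (0 : ℝ) ≤ n + 1)] at this
    nlinarith
  have hlb2 : ∀ y ∈ Set.Ioo (x / 2) ((1 + x) / 2), ∀ n : ℕ, c * ((n : ℝ) + 1) ≤ |y + (n + 1)| := by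
    intro y hym n
    have := aux_lb (by linarith) (by linarith) hym (-((n : ℤ) + 1))
    push_cast at this
    rw [abs_neg, abs_of_nonneg (by positivity : (0 : ℝ) ≤ n + 1)] at this
    rw [sub_neg_eq_add] at this
    nlinarith
  have hne : ∀ z : ℝ, ∀ n : ℕ, c * ((n : ℝ) + 1) ≤ |z| → z ≠ 0 := by
    intro z n h
    have : 0 < |z| := lt_of_lt_of_le (by positivity) h
    exact abs_pos.1 this
  have hsu : Summable fun n : ℕ => 2 / c ^ 2 / ((n : ℝ) + 1) ^ 2 := by
    have := (aux_summable 2 le_rfl (2 / c ^ 2)).comp_injective (Nat.cast_injective (R := ℤ))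
    refine this.congr fun n => ?_
    simp
  have hcs : Summable fun n : ℕ => (1 / (x - (n + 1)) + 1 / (x + (n + 1))) := by
    refine Summable.of_norm_bounded (g := fun n : ℕ => 2 / c ^ 2 / ((n : ℝ) + 1) ^ 2) hsu fun n => ?_
    have e1 := hlb1 x hy n
    have e2 := hlb2 x hy n
    have n1 := hne _ _ e1
    have n2 := hne _ _ e2
    have : 1 / (x - (n + 1)) + 1 / (x + (n + 1)) = (2 * x) / ((x - (n + 1)) * (x + (n + 1))) := by
      field_simp; ring
    rw [this, Real.norm_eq_abs, abs_div, abs_mul, abs_mul, abs_of_pos h1, div_div, ← mul_pow, sq]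
    gcongr
    simp; linarith
  have hd : HasDerivAt (fun z : ℝ => ∑' n : ℕ, (1 / (z - (n + 1)) + 1 / (z + (n + 1))))
      (∑' n : ℕ, (-(1 / (x - (n + 1)) ^ 2) - 1 / (x + (n + 1)) ^ 2)) x := by
    refine hasDerivAt_tsum_of_isPreconnected (u := fun n : ℕ => 2 / c ^ 2 / ((n : ℝ) + 1) ^ 2)
      hsu (t := Set.Ioo (x / 2) ((1 + x) / 2)) isOpen_Ioo
      isPreconnected_Ioo (g' := fun (n : ℕ) (y : ℝ) => (-(1 / (y - (n + 1)) ^ 2) - 1 / (y + (n + 1)) ^ 2)) ?_ ?_ hy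
      hcs hy
    · intro n y hym
      have n1 := hne _ _ (hlb1 y hym n)
      have n2 := hne _ _ (hlb2 y hym n)
      have d1 := ((hasDerivAt_id y).sub_const ((n : ℝ) + 1)).inv n1
      have d2 := ((hasDerivAt_id y).add_const ((n : ℝ) + 1)).inv n2
      convert d1.add d2 using 1
      · ext z; simp
      · simp; ring
    · intro n y hym
      have e1 := hlb1 y hym n
      have e2 := hlb2 y hym n
      have b1 : 1 / |y - (n + 1)| ^ 2 ≤ 1 / (c * ((n : ℝ) + 1)) ^ 2 := by gcongr
      have b2 : 1 / |y + (n + 1)| ^ 2 ≤ 1 / (c * ((n : ℝ) + 1)) ^ 2 := by gcongr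
      rw [sq_abs] at b1 b2
      rw [Real.norm_eq_abs, div_div, ← mul_pow, abs_le]
      have p1 : 0 ≤ 1 / (y - (n + 1)) ^ 2 := by positivity
      have p2 : 0 ≤ 1 / (y + (n + 1)) ^ 2 := by positivity
      have : 2 / (c * ((n : ℝ) + 1)) ^ 2 = 1 / (c * ((n : ℝ) + 1)) ^ 2 + 1 / (c * ((n : ℝ) + 1)) ^ 2 := by ring
      constructor <;> linarith
  have hd2 : HasDerivAt (fun z : ℝ => π * (Real.cos (π * z) / Real.sin (π * z)) - 1 / z)
      (-(π ^ 2 / Real.sin (π * x) ^ 2) + 1 / x ^ 2) x := by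
    have d1 := ((hasDerivAt_cos_pi x).div (hasDerivAt_sin_pi x) hs).const_mul π
    have d2 := (hasDerivAt_id x).inv h1.ne'
    have h : HasDerivAt (fun z : ℝ => π * (Real.cos (π * z) / Real.sin (π * z)) - z⁻¹) _ x := d1.sub d2
    simp only [one_div] at h ⊢
    refine h.congr_deriv ?_
    simp only [id]
    have := Real.cos_sq' (π * x)
    field_simp
    ring_nf
    rw [this]
    ring
  have heq : (fun z : ℝ => π * (Real.cos (π * z) / Real.sin (π * z)) - 1 / z) =ᶠ[nhds x]
      (fun z : ℝ => ∑' n : ℕ, (1 / (z - (n + 1)) + 1 / (z + (n + 1)))) := by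
    filter_upwards [isOpen_Ioo.mem_nhds hx] with z hz
    exact cot_real hz
  have huniq := (hd.congr_of_eventuallyEq heq).unique hd2
  have htot : ∑' m : ℤ, 1 / (x - m) ^ 2 = (∑' n : ℕ, 1 / (x - (n + 1)) ^ 2) + 1 / x ^ 2 +
      ∑' n : ℕ, 1 / (x + (n + 1)) ^ 2 := by
    have := tsum_of_add_one_of_neg_add_one (f := fun m : ℤ => 1 / (x - m) ^ 2)
      (by simpa using hs1) (by
        refine hs2.congr fun n => ?_
        push_cast
        ring)
    rw [this]
    have : ∀ n : ℕ, x - ((-((n : ℤ) + 1) : ℤ) : ℝ) = x + (n + 1) := by intro n; push_cast; ring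
    simp only [this]
    simp
  rw [htot]
  have e3 := (hs1.neg.tsum_sub hs2)
  rw [e3, tsum_neg] at huniq
  linarith

lemma A3 {x : ℝ} (hx : x ∈ Set.Ioo (0 : ℝ) 1) :
    ∑' m : ℤ, 1 / (x - m) ^ 3 = π ^ 3 * Real.cos (π * x) / Real.sin (π * x) ^ 3 := by
  have hs := (sin_pos_of_Ioo hx).ne'
  have hd := aux_deriv_pow hx 2 le_rfl
  have hd2 : HasDerivAt (fun z : ℝ => π ^ 2 / Real.sin (π * z) ^ 2)
      (-2 * (π ^ 3 * Real.cos (π * x) / Real.sin (π * x) ^ 3)) x := by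
    have h : HasDerivAt (fun z : ℝ => π ^ 2 * (Real.sin (π * z) ^ 2)⁻¹) _ x :=
      (((hasDerivAt_sin_pi x).pow 2).inv (pow_ne_zero 2 hs)).const_mul (π ^ 2)
    simp only [div_eq_mul_inv]
    refine h.congr_deriv ?_
    simp
    field_simp
  have heq : (fun z : ℝ => π ^ 2 / Real.sin (π * z) ^ 2) =ᶠ[nhds x]
      (fun z : ℝ => ∑' m : ℤ, 1 / (z - m) ^ 2) := by
    filter_upwards [isOpen_Ioo.mem_nhds hx] with z hz
    exact (A2 hz).symm
  have := (hd.congr_of_eventuallyEq heq).unique hd2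
  rw [tsum_mul_left] at this
  push_cast at this
  norm_num at this ⊢
  linarith

lemma A4 {x : ℝ} (hx : x ∈ Set.Ioo (0 : ℝ) 1) :
    ∑' m : ℤ, 1 / (x - m) ^ 4 = π ^ 4 * (1 / Real.sin (π * x) ^ 4 - 2 / 3 / Real.sin (π * x) ^ 2) := by
  have hs := (sin_pos_of_Ioo hx).ne'
  have hd := aux_deriv_pow hx 3 (by norm_num)
  have hd2 : HasDerivAt (fun z : ℝ => π ^ 3 * Real.cos (π * z) / Real.sin (π * z) ^ 3)
      (-3 * (π ^ 4 * (1 / Real.sin (π * x) ^ 4 - 2 / 3 / Real.sin (π * x) ^ 2))) x := by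
    have h : HasDerivAt (fun z : ℝ => π ^ 3 * Real.cos (π * z) / Real.sin (π * z) ^ 3) _ x :=
      (((hasDerivAt_cos_pi x).const_mul (π ^ 3)).div ((hasDerivAt_sin_pi x).pow 3)) (pow_ne_zero 3 hs)
    refine h.congr_deriv ?_
    have := Real.cos_sq' (π * x)
    simp
    field_simp
    ring_nf
    rw [this]
    ring
  have heq : (fun z : ℝ => π ^ 3 * Real.cos (π * z) / Real.sin (π * z) ^ 3) =ᶠ[nhds x]
      (fun z : ℝ => ∑' m : ℤ, 1 / (z - m) ^ 3) := by
    filter_upwards [isOpen_Ioo.mem_nhds hx] with z hz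
    exact (A3 hz).symm
  have := (hd.congr_of_eventuallyEq heq).unique hd2
  rw [tsum_mul_left] at this
  push_cast at this
  norm_num at this ⊢
  linarith

open scoped Real
open Complex

noncomputable section

/-- the exponential with frequency `n` -/
def ee (n : ℤ) : ℝ → ℂ := fun t => Complex.exp (2 * π * Complex.I * n * t)

/-- trigonometric polynomials of degree at most `d` -/
def TP (d : ℕ) : Submodule ℂ (ℝ → ℂ) := Submodule.span ℂ (ee '' Set.Icc (-(d : ℤ)) d)

/-- the even kernel -/
def fK (y : ℝ) : ℝ := Real.sinc y ^ 4
/-- the odd kernel -/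
def hK (y : ℝ) : ℝ := y * Real.sinc y ^ 4

lemma ee_mem {d : ℕ} {n : ℤ} (h1 : -(d : ℤ) ≤ n) (h2 : n ≤ d) : ee n ∈ TP d :=
  Submodule.subset_span ⟨n, ⟨h1, h2⟩, rfl⟩

lemma ee_add (m n : ℤ) : ee (m + n) = ee m * ee n := by
  ext t
  simp only [ee, Pi.mul_apply, ← Complex.exp_add]
  congr 1
  push_cast
  ring

lemma TP_mono {d d' : ℕ} (h : d ≤ d') : TP d ≤ TP d' := by
  apply Submodule.span_mono
  apply Set.image_mono
  apply Set.Icc_subset_Icc <;> simpa using h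

lemma TP_mul {d d' : ℕ} {p q : ℝ → ℂ} (hp : p ∈ TP d) (hq : q ∈ TP d') : p * q ∈ TP (d + d') := by
  have h := Submodule.mul_mem_mul hp hq
  rw [TP, TP, Submodule.span_mul_span] at h
  refine Submodule.span_mono ?_ h
  rintro _ ⟨_, ⟨m, hm, rfl⟩, _, ⟨n, hn, rfl⟩, rfl⟩
  refine ⟨m + n, ?_, ee_add m n⟩
  obtain ⟨a, b⟩ := hm
  obtain ⟨c, d⟩ := hn
  constructor <;> push_cast <;> linarith

lemma TP_periodic {d : ℕ} {p : ℝ → ℂ} (hp : p ∈ TP d) (t : ℝ) (n : ℤ) : p (t + n) = p t := by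
  induction hp using Submodule.span_induction with
  | mem x hx =>
    obtain ⟨m, -, rfl⟩ := hx
    simp only [ee]
    rw [Complex.exp_eq_exp_iff_exists_int]
    exact ⟨m * n, by push_cast; ring⟩
  | zero => rfl
  | add x y _ _ hx hy => simp [hx, hy]
  | smul a x _ hx => simp [hx]

lemma TP_shift {d : ℕ} {p : ℝ → ℂ} (hp : p ∈ TP d) (t₀ : ℝ) : (fun t => p (t - t₀)) ∈ TP d := by
  induction hp using Submodule.span_induction with
  | mem x hx =>
    obtain ⟨m, hm, rfl⟩ := hx
    have : (fun t : ℝ => ee m (t - t₀)) = (Complex.exp (2 * π * Complex.I * m * (-t₀))) • ee m := by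
      ext t
      simp only [ee, Pi.smul_apply, smul_eq_mul, ← Complex.exp_add]
      congr 1
      push_cast
      ring
    rw [this]
    exact Submodule.smul_mem _ _ (Submodule.subset_span ⟨m, hm, rfl⟩)
  | zero => exact Submodule.zero_mem _
  | add x y _ _ hx hy => exact Submodule.add_mem _ hx hy
  | smul a x _ hx => exact Submodule.smul_mem _ a hx

lemma ee_one_cos (n : ℕ) (t : ℝ) :
    ee n t + ee (-n) t = ((2 * Real.cos (2 * (n * (π * t))) : ℝ) : ℂ) := by
  simp only [ee]
  push_cast
  rw [Complex.cos]
  have h1 : (2 * π * Complex.I * n * t : ℂ) = 2 * (n * (π * t)) * Complex.I := by ring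
  have h2 : (2 * π * Complex.I * (-n) * t : ℂ) = -(2 * (n * (π * t))) * Complex.I := by ring
  rw [h1, h2]
  ring

lemma ee_one_sin (n : ℕ) (t : ℝ) :
    -Complex.I * (ee n t - ee (-n) t) = ((2 * Real.sin (2 * (n * (π * t))) : ℝ) : ℂ) := by
  simp only [ee]
  push_cast
  rw [Complex.sin]
  have h1 : (2 * π * Complex.I * n * t : ℂ) = 2 * (n * (π * t)) * Complex.I := by ring
  have h2 : (2 * π * Complex.I * (-n) * t : ℂ) = -(2 * (n * (π * t))) * Complex.I := by ring
  rw [h1, h2]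
  ring

lemma cos_mem {n d : ℕ} (h : n ≤ d) :
    (fun t : ℝ => ((2 * Real.cos (2 * (n * (π * t))) : ℝ) : ℂ)) ∈ TP d := by
  have : (fun t : ℝ => ((2 * Real.cos (2 * (n * (π * t))) : ℝ) : ℂ)) = ee n + ee (-n) := by
    ext t; rw [← ee_one_cos]; rfl
  rw [this]
  exact Submodule.add_mem _ (ee_mem (by omega) (by omega)) (ee_mem (by omega) (by omega))

lemma sin_mem {n d : ℕ} (h : n ≤ d) :
    (fun t : ℝ => ((2 * Real.sin (2 * (n * (π * t))) : ℝ) : ℂ)) ∈ TP d := by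
  have : (fun t : ℝ => ((2 * Real.sin (2 * (n * (π * t))) : ℝ) : ℂ)) = (-Complex.I) • (ee n - ee (-n)) := by
    ext t; rw [← ee_one_sin]; rfl
  rw [this]
  exact Submodule.smul_mem _ _ (Submodule.sub_mem _ (ee_mem (by omega) (by omega)) (ee_mem (by omega) (by omega)))

lemma const_mem (d : ℕ) (c : ℂ) : (fun _ : ℝ => c) ∈ TP d := by
  have : (fun _ : ℝ => c) = c • ee 0 := by ext t; simp [ee]
  rw [this]
  exact Submodule.smul_mem _ _ (ee_mem (by omega) (by omega))

lemma dirichlet_ex (k : ℕ) : ∃ D : ℝ → ℝ, (fun t => (D t : ℂ)) ∈ TP k ∧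
    (∀ t, D t * Real.sin (π * t) = Real.sin ((2 * k + 1) * (π * t))) ∧ D 0 = 2 * k + 1 := by
  induction k with
  | zero => exact ⟨fun _ => 1, by simpa using const_mem 0 1, by simp, by simp⟩
  | succ k ih =>
    obtain ⟨D, h1, h2, h3⟩ := ih
    refine ⟨fun t => D t + 2 * Real.cos (2 * ((k + 1 : ℕ) * (π * t))), ?_, ?_, ?_⟩
    · have := Submodule.add_mem _ (TP_mono (Nat.le_succ k) h1) (cos_mem (le_refl (k + 1)))
      convert this using 1
      ext t; simp
    · intro t
      rw [add_mul, h2]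
      push_cast
      have e1 : (2 * (k : ℝ) + 1) * (π * t) = 2 * ((k + 1) * (π * t)) - π * t := by ring
      have e2 : (2 * ((k : ℝ) + 1) + 1) * (π * t) = 2 * ((k + 1) * (π * t)) + π * t := by ring
      rw [e1, e2, Real.sin_sub, Real.sin_add]
      ring
    · simp [h3]; ring

lemma fejer_ex (N : ℕ) : ∃ F : ℝ → ℝ, (fun t => (F t : ℂ)) ∈ TP N ∧
    (∀ t, F t * Real.sin (π * t) ^ 2 = Real.sin (N * (π * t)) ^ 2) ∧ F 0 = N ^ 2 := by
  induction N with
  | zero => exact ⟨fun _ => 0, by simpa using const_mem 0 0, by simp, by simp⟩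
  | succ k ih =>
    obtain ⟨F, h1, h2, h3⟩ := ih
    obtain ⟨D, g1, g2, g3⟩ := dirichlet_ex k
    refine ⟨fun t => F t + D t, ?_, ?_, ?_⟩
    · have := Submodule.add_mem _ (TP_mono (Nat.le_succ k) h1) (TP_mono (Nat.le_succ k) g1)
      convert this using 1
      ext t; simp
    · intro t
      have e0 : D t * Real.sin (π * t) ^ 2 = (D t * Real.sin (π * t)) * Real.sin (π * t) := by ring
      rw [add_mul, h2, e0, g2]
      push_cast
      have e1 : (2 * (k : ℝ) + 1) * (π * t) = k * (π * t) + (k * (π * t) + π * t) := by ring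
      have e2 : ((k : ℝ) + 1) * (π * t) = k * (π * t) + π * t := by ring
      rw [e1, e2, Real.sin_add (k * (π * t)) (k * (π * t) + π * t), Real.sin_add, Real.cos_add]
      have := Real.sin_sq_add_cos_sq (k * (π * t))
      have h' := Real.sin_sq_add_cos_sq (π * t)
      linear_combination (Real.sin (k * (π * t)))^2 * (- h')
    · simp [h3, g3]; ring

lemma conj_ex (N : ℕ) : ∃ G : ℝ → ℝ, (fun t => (G t : ℂ)) ∈ TP N ∧
    (∀ t, G t * Real.sin (π * t) = Real.sin (N * (π * t)) ^ 2 * Real.cos (π * t)) ∧ G 0 = 0 := by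
  induction N with
  | zero => exact ⟨fun _ => 0, by simpa using const_mem 0 0, by simp, rfl⟩
  | succ k ih =>
    obtain ⟨G, h1, h2, h3⟩ := ih
    refine ⟨fun t => G t + (1 / 4) * (2 * Real.sin (2 * ((k + 1 : ℕ) * (π * t))) + 2 * Real.sin (2 * (k * (π * t)))), ?_, ?_, by simp [h3]⟩
    · have := Submodule.add_mem _ (TP_mono (Nat.le_succ k) h1) (Submodule.smul_mem _ (1 / 4 : ℂ)
        (Submodule.add_mem _ (sin_mem (le_refl (k + 1))) (sin_mem (Nat.le_succ k))))
      convert this using 1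
      ext t; simp; ring
    · intro t
      rw [add_mul, h2]
      push_cast
      have e2 : ((k : ℝ) + 1) * (π * t) = k * (π * t) + π * t := by ring
      rw [e2, Real.sin_two_mul, Real.sin_two_mul, Real.sin_add, Real.cos_add]
      have h' := Real.sin_sq_add_cos_sq (π * t)
      have h'' := Real.sin_sq_add_cos_sq (k * (π * t))
      generalize Real.sin (π * t) = a at *
      generalize Real.cos (π * t) = b at *
      generalize Real.sin (k * (π * t)) = c at *
      generalize Real.cos (k * (π * t)) = d at *
      have hb : b ^ 2 = 1 - a ^ 2 := by linarith
      have hb3 : b ^ 3 = (1 - a ^ 2) * b := by rw [← hb]; ring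
      ring_nf
      simp only [hb, hb3]
      ring

lemma sinc_pi {w t : ℝ} (hw : w ≠ 0) (ht : t ≠ 0) : Real.sinc (w * t) = Real.sin (w * t) / (w * t) :=
  Real.sinc_of_ne_zero (mul_ne_zero hw ht)

lemma sin_pow_four (N : ℕ) (t : ℝ) (m : ℤ) :
    Real.sin (π * N * (t - m)) ^ 4 = Real.sin (N * (π * t)) ^ 4 := by
  have : π * N * (t - m) = N * (π * t) - ((N * m : ℤ) : ℝ) * π := by push_cast; ring
  rw [this, Real.sin_sub_int_mul_pi, mul_pow]
  have : ((-1 : ℝ) ^ (N * m : ℤ)) ^ 4 = 1 := by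
    rw [← zpow_natCast, ← zpow_mul, mul_comm, zpow_mul]
    norm_num
  rw [this, one_mul]

lemma kernel_trig (N : ℕ) (hN : 1 ≤ N) : ∃ K H : ℝ → ℝ,
    (fun t => (K t : ℂ)) ∈ TP (2 * N) ∧ (fun t => (H t : ℂ)) ∈ TP (2 * N) ∧
    (∀ t, HasSum (fun m : ℤ => fK (π * N * (t - m))) (K t)) ∧
    (∀ t, HasSum (fun m : ℤ => hK (π * N * (t - m))) (H t)) := by
  obtain ⟨F, F1, F2, F3⟩ := fejer_ex N
  obtain ⟨G, G1, G2, G3⟩ := conj_ex N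
  have hN0 : (N : ℝ) ≠ 0 := by positivity
  have hw : π * (N : ℝ) ≠ 0 := by positivity
  set K : ℝ → ℝ := fun t => (1 / (N : ℝ) ^ 4) * (F t * F t - (2 / 3) * (Real.sin (N * (π * t)) ^ 2 * F t)) with hK'
  set H : ℝ → ℝ := fun t => (1 / (N : ℝ) ^ 3) * (F t * G t) with hH'
  have hKm : (fun t => (K t : ℂ)) ∈ TP (2 * N) := by
    have hs : (fun t : ℝ => ((Real.sin (N * (π * t)) ^ 2 : ℝ) : ℂ)) ∈ TP N := by
      have := Submodule.add_mem _ (const_mem N (1 / 2)) (Submodule.smul_mem _ (-1 / 4 : ℂ) (cos_mem (le_refl N)))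
      convert this using 1
      ext t
      simp only [Pi.add_apply, Pi.smul_apply, smul_eq_mul]
      rw [Real.cos_two_mul, Real.cos_sq']
      push_cast
      ring
    have := Submodule.smul_mem _ (1 / (N : ℂ) ^ 4) (Submodule.sub_mem _ (TP_mul F1 F1)
      (Submodule.smul_mem _ (2 / 3 : ℂ) (TP_mul hs F1)))
    rw [two_mul]
    convert this using 1
    ext t
    simp [hK']
  have hHm : (fun t => (H t : ℂ)) ∈ TP (2 * N) := by
    have := Submodule.smul_mem _ (1 / (N : ℂ) ^ 3) (TP_mul F1 G1)
    rw [two_mul]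
    convert this using 1
    ext t
    simp [hH']
  have perK : ∀ t : ℝ, ∀ n : ℤ, K (t + n) = K t := by
    intro t n
    have := TP_periodic hKm t n
    exact_mod_cast this
  have perH : ∀ t : ℝ, ∀ n : ℤ, H (t + n) = H t := by
    intro t n
    have := TP_periodic hHm t n
    exact_mod_cast this
  have base : ∀ t ∈ Set.Ico (0 : ℝ) 1, HasSum (fun m : ℤ => fK (π * N * (t - m))) (K t) ∧
      HasSum (fun m : ℤ => hK (π * N * (t - m))) (H t) := by
    intro t ht
    rcases eq_or_lt_of_le ht.1 with h0 | h0
    · subst h0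
      have hz : ∀ m : ℤ, m ≠ 0 → Real.sinc (π * N * ((0 : ℝ) - m)) = 0 := by
        intro m hm
        have hm' : (m : ℝ) ≠ 0 := by exact_mod_cast hm
        rw [sinc_pi hw (by simpa using hm')]
        have : π * N * ((0 : ℝ) - m) = ((-(N * m) : ℤ) : ℝ) * π := by push_cast; ring
        rw [this, Real.sin_int_mul_pi]
        simp
      constructor
      · have : K 0 = fK (π * N * ((0 : ℝ) - (0 : ℤ))) := by
          simp [hK', fK, F3]
          field_simp
        rw [this]
        apply hasSum_single
        intro m hm
        simp only [fK, hz m hm]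
        norm_num
      · have : H 0 = 0 := by simp [hH', G3]
        rw [this]
        convert hasSum_zero using 2 with m
        by_cases hm : m = 0
        · simp [hK, hm]
        · simp only [hK, hz m hm]; norm_num
    · have hx : t ∈ Set.Ioo (0 : ℝ) 1 := ⟨h0, ht.2⟩
      have hs := (sin_pos_of_Ioo hx).ne'
      have hne : ∀ m : ℤ, t - m ≠ 0 := by
        intro m hm
        have h1 : t = m := by linarith
        have h2 := hx.1
        have h3 := hx.2
        rw [h1] at h2 h3
        have : 0 < m := by exact_mod_cast h2
        have : m < 1 := by exact_mod_cast h3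
        omega
      have hF : F t = Real.sin (N * (π * t)) ^ 2 / Real.sin (π * t) ^ 2 := by
        rw [← F2]; field_simp
      have hG : G t = Real.sin (N * (π * t)) ^ 2 * Real.cos (π * t) / Real.sin (π * t) := by
        rw [← G2]; field_simp
      constructor
      · have h4 := (aux_summable_pow hx 4 (by norm_num)).hasSum
        rw [A4 hx] at h4
        have h5 := h4.mul_left (Real.sin (N * (π * t)) ^ 4 / (π * N) ^ 4)
        have e1 : (fun m : ℤ => fK (π * N * (t - m))) = fun m : ℤ =>
            Real.sin (N * (π * t)) ^ 4 / (π * N) ^ 4 * (1 / (t - m) ^ 4) := by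
          ext m
          rw [fK, sinc_pi hw (hne m), div_pow, sin_pow_four]
          have := hne m
          field_simp
        have e2 : K t = Real.sin (N * (π * t)) ^ 4 / (π * N) ^ 4 * (π ^ 4 * (1 / Real.sin (π * t) ^ 4 - 2 / 3 / Real.sin (π * t) ^ 2)) := by
          simp only [hK', hF]
          field_simp
        rw [e1, e2]
        exact h5
      · have h4 := (aux_summable_pow hx 3 (by norm_num)).hasSum
        rw [A3 hx] at h4
        have h5 := h4.mul_left (Real.sin (N * (π * t)) ^ 4 / (π * N) ^ 3)
        have e1 : (fun m : ℤ => hK (π * N * (t - m))) = fun m : ℤ =>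
            Real.sin (N * (π * t)) ^ 4 / (π * N) ^ 3 * (1 / (t - m) ^ 3) := by
          ext m
          rw [hK, sinc_pi hw (hne m), div_pow, sin_pow_four]
          have := hne m
          field_simp
        have e2 : H t = Real.sin (N * (π * t)) ^ 4 / (π * N) ^ 3 * (π ^ 3 * Real.cos (π * t) / Real.sin (π * t) ^ 3) := by
          simp only [hH', hF, hG]
          field_simp
        rw [e1, e2]
        exact h5
  have shift : ∀ (φ : ℝ → ℝ) (t s : ℝ), HasSum (fun m : ℤ => φ (π * N * (Int.fract t - m))) s →
      HasSum (fun m : ℤ => φ (π * N * (t - m))) s := by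
    intro φ t s h
    rw [← (Equiv.addRight (-⌊t⌋)).hasSum_iff] at h
    convert h using 2 with m
    simp only [Function.comp, Equiv.coe_addRight, Int.fract]
    push_cast
    ring_nf
  have hfr : ∀ t : ℝ, Int.fract t ∈ Set.Ico (0 : ℝ) 1 := fun t => ⟨Int.fract_nonneg t, Int.fract_lt_one t⟩
  refine ⟨K, H, hKm, hHm, fun t => ?_, fun t => ?_⟩
  · have := shift fK t _ (base _ (hfr t)).1
    rwa [← perK _ ⌊t⌋, Int.fract_add_floor] at this
  · have := shift hK t _ (base _ (hfr t)).2
    rwa [← perH _ ⌊t⌋, Int.fract_add_floor] at this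
end

open scoped Real
open Complex

noncomputable section

/-- derivative of `fK` -/
def f1 (y : ℝ) : ℝ := 4 * Real.sin y ^ 3 * Real.cos y / y ^ 4 - 4 * Real.sin y ^ 4 / y ^ 5
/-- derivative of `hK` -/
def h1 (y : ℝ) : ℝ := fK y + y * f1 y
/-- second derivative of `fK` -/
def f2 (y : ℝ) : ℝ := (12 * Real.sin y ^ 2 * Real.cos y ^ 2 - 4 * Real.sin y ^ 4) / y ^ 4
  - 8 * (4 * Real.sin y ^ 3 * Real.cos y) / y ^ 5 + 20 * Real.sin y ^ 4 / y ^ 6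
/-- second derivative of `hK` -/
def h2 (y : ℝ) : ℝ := 2 * f1 y + y * f2 y

lemma f1_zero : f1 0 = 0 := by simp [f1]
lemma fK_zero : fK 0 = 1 := by simp [fK]
lemma hK_zero : hK 0 = 0 := by simp [hK]
lemma h1_zero : h1 0 = 1 := by simp [h1, fK]

lemma fK_eq {y : ℝ} (hy : y ≠ 0) : fK y = Real.sin y ^ 4 / y ^ 4 := by
  rw [fK, Real.sinc_of_ne_zero hy, div_pow]
lemma hK_eq {y : ℝ} (hy : y ≠ 0) : hK y = Real.sin y ^ 4 / y ^ 3 := by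
  rw [hK, Real.sinc_of_ne_zero hy, div_pow]; field_simp
lemma h1_eq {y : ℝ} (hy : y ≠ 0) : h1 y = 4 * Real.sin y ^ 3 * Real.cos y / y ^ 3 - 3 * Real.sin y ^ 4 / y ^ 4 := by
  rw [h1, f1, fK_eq hy]; field_simp; ring
lemma h2_eq {y : ℝ} (hy : y ≠ 0) : h2 y = (12 * Real.sin y ^ 2 * Real.cos y ^ 2 - 4 * Real.sin y ^ 4) / y ^ 3
  - 6 * (4 * Real.sin y ^ 3 * Real.cos y) / y ^ 4 + 12 * Real.sin y ^ 4 / y ^ 5 := by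
  rw [h2, f1, f2]; field_simp; ring

lemma hasDeriv_fK {y : ℝ} (hy : y ≠ 0) : HasDerivAt fK (f1 y) y := by
  have h : HasDerivAt (fun y : ℝ => Real.sin y ^ 4 / y ^ 4) (f1 y) y := by
    have := ((Real.hasDerivAt_sin y).fun_pow 4).fun_div ((hasDerivAt_id y).fun_pow 4) (pow_ne_zero 4 hy)
    refine this.congr_deriv ?_
    simp only [id, f1]
    field_simp
    norm_num
    ring
  refine h.congr_of_eventuallyEq ?_
  filter_upwards [isOpen_ne.mem_nhds hy] with z hz
  exact fK_eq hz

lemma hasDeriv_hK {y : ℝ} (hy : y ≠ 0) : HasDerivAt hK (h1 y) y := by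
  have h := (hasDerivAt_id y).mul (hasDeriv_fK hy)
  refine (h.congr_deriv (f' := _) ?_)
  simp [h1]

lemma hasDeriv_f1 {y : ℝ} (hy : y ≠ 0) : HasDerivAt f1 (f2 y) y := by
  have a := ((((Real.hasDerivAt_sin y).fun_pow 3).const_mul 4).fun_mul (Real.hasDerivAt_cos y)).fun_div
    ((hasDerivAt_id y).fun_pow 4) (pow_ne_zero 4 hy)
  have b := (((Real.hasDerivAt_sin y).fun_pow 4).const_mul 4).fun_div
    ((hasDerivAt_id y).fun_pow 5) (pow_ne_zero 5 hy)
  refine (a.fun_sub b).congr_deriv ?_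
  simp only [id, f2]
  field_simp
  norm_num
  ring

lemma hasDeriv_h1 {y : ℝ} (hy : y ≠ 0) : HasDerivAt h1 (h2 y) y := by
  have h := (hasDeriv_fK hy).add ((hasDerivAt_id y).mul (hasDeriv_f1 hy))
  refine h.congr_deriv ?_
  simp [h2]; ring

lemma bnd_N (y : ℝ) : |Real.sin y ^ 4| ≤ 1 := by
  rw [abs_pow]
  exact pow_le_one₀ (abs_nonneg _) (Real.abs_sin_le_one y)

lemma bnd_N1 (y : ℝ) : |4 * Real.sin y ^ 3 * Real.cos y| ≤ 1.3 := by
  apply abs_le_of_sq_le_sq _ (by norm_num)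
  have h : (4 * Real.sin y ^ 3 * Real.cos y) ^ 2 = 16 * (Real.sin y ^ 2) ^ 3 * (1 - Real.sin y ^ 2) := by
    have := Real.sin_sq_add_cos_sq y
    have h2 : Real.cos y ^ 2 = 1 - Real.sin y ^ 2 := by linarith
    rw [mul_pow, h2]; ring
  rw [h]
  generalize Real.sin y ^ 2 = u
  nlinarith [mul_nonneg (sq_nonneg (u - 3 / 4)) (show 0 ≤ u ^ 2 + u / 2 + 3 / 16 by nlinarith [sq_nonneg (u + 1 / 4)])]

lemma bnd_N2 (y : ℝ) : |12 * Real.sin y ^ 2 * Real.cos y ^ 2 - 4 * Real.sin y ^ 4| ≤ 4 := by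
  have h2 : Real.cos y ^ 2 = 1 - Real.sin y ^ 2 := by linarith [Real.sin_sq_add_cos_sq y]
  have h3 : Real.sin y ^ 2 ≤ 1 := by nlinarith [sq_nonneg (Real.cos y)]
  have h4 := sq_nonneg (Real.sin y)
  have e : Real.sin y ^ 4 = (Real.sin y ^ 2) ^ 2 := by ring
  rw [h2, e]
  generalize Real.sin y ^ 2 = u at *
  rw [abs_le]
  constructor <;> nlinarith [mul_nonneg h4 (sub_nonneg.2 h3), sq_nonneg (u - 3 / 8)]

lemma abs_div_le {c B y : ℝ} {k : ℕ} (hc : |c| ≤ B) : |c / y ^ k| ≤ B / |y| ^ k := by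
  rw [abs_div, abs_pow]
  gcongr

lemma shiftpow {B y ρ : ℝ} {k : ℕ} (j : ℕ) (hB : 0 ≤ B) (hρ : 0 < ρ) (hy : ρ ≤ |y|) :
    B / |y| ^ (k + j) ≤ (B / ρ ^ j) / |y| ^ k := by
  have : 0 < |y| := lt_of_lt_of_le hρ hy
  rw [div_div, pow_add]
  apply div_le_div_of_nonneg_left hB (by positivity)
  rw [mul_comm (ρ ^ j)]
  gcongr

lemma fK_bd {y : ℝ} (hy : y ≠ 0) : |fK y| ≤ 1 / |y| ^ 4 := by
  rw [fK_eq hy]; exact abs_div_le (bnd_N y)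
lemma hK_bd {y : ℝ} (hy : y ≠ 0) : |hK y| ≤ 1 / |y| ^ 3 := by
  rw [hK_eq hy]; exact abs_div_le (bnd_N y)

lemma cm {c B : ℝ} (k : ℝ) (hk : 0 ≤ k) (h : |c| ≤ B) : |k * c| ≤ k * B := by
  rw [abs_mul, abs_of_nonneg hk]; gcongr

lemma f1_bd {y : ℝ} (hy : 3.1 ≤ |y|) : |f1 y| ≤ 2.6 / |y| ^ 4 := by
  have a := abs_div_le (y := y) (k := 4) (bnd_N1 y)
  have b := abs_div_le (y := y) (k := 5) (cm 4 (by norm_num) (bnd_N y))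
  have c := shiftpow (k := 4) 1 (show (0 : ℝ) ≤ 4 * 1 by norm_num) (by norm_num) hy
  have h := abs_sub (4 * Real.sin y ^ 3 * Real.cos y / y ^ 4) (4 * Real.sin y ^ 4 / y ^ 5)
  have p : 0 < |y| := lt_of_lt_of_le (by norm_num) hy
  have d : 1.3 / |y| ^ 4 + 4 * 1 / 3.1 ^ 1 / |y| ^ 4 ≤ 2.6 / |y| ^ 4 := by
    rw [← add_div]; gcongr; norm_num
  rw [f1]; norm_num at *; linarith

lemma h1_bd {y : ℝ} (hy : 3.1 ≤ |y|) : |h1 y| ≤ 2.27 / |y| ^ 3 := by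
  have p : 0 < |y| := lt_of_lt_of_le (by norm_num) hy
  have a := abs_div_le (y := y) (k := 3) (bnd_N1 y)
  have b := abs_div_le (y := y) (k := 4) (cm 3 (by norm_num) (bnd_N y))
  have c := shiftpow (k := 3) 1 (show (0 : ℝ) ≤ 3 * 1 by norm_num) (by norm_num) hy
  have h := abs_sub (4 * Real.sin y ^ 3 * Real.cos y / y ^ 3) (3 * Real.sin y ^ 4 / y ^ 4)
  have d : 1.3 / |y| ^ 3 + 3 * 1 / 3.1 ^ 1 / |y| ^ 3 ≤ 2.27 / |y| ^ 3 := by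
    rw [← add_div]; gcongr; norm_num
  rw [h1_eq (abs_pos.1 p)]; norm_num at *; linarith

lemma f2_bd {y : ℝ} (hy : 2.35 ≤ |y|) : |f2 y| ≤ 12.1 / |y| ^ 4 := by
  have p : 0 < |y| := lt_of_lt_of_le (by norm_num) hy
  have a := abs_div_le (y := y) (k := 4) (bnd_N2 y)
  have b := abs_div_le (y := y) (k := 5) (cm 8 (by norm_num) (bnd_N1 y))
  have c := abs_div_le (y := y) (k := 6) (cm 20 (by norm_num) (bnd_N y))
  have b' := shiftpow (k := 4) 1 (show (0 : ℝ) ≤ 8 * 1.3 by norm_num) (by norm_num) hy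
  have c' := shiftpow (k := 4) 2 (show (0 : ℝ) ≤ 20 * 1 by norm_num) (by norm_num) hy
  have d : 4 / |y| ^ 4 + 8 * 1.3 / 2.35 ^ 1 / |y| ^ 4 + 20 * 1 / 2.35 ^ 2 / |y| ^ 4 ≤ 12.1 / |y| ^ 4 := by
    rw [← add_div, ← add_div]; gcongr; norm_num
  rw [f2]
  refine (abs_add_le _ _).trans ?_
  refine (add_le_add (abs_sub _ _) le_rfl).trans ?_
  refine le_trans ?_ d
  exact add_le_add (add_le_add a (b.trans b')) (c.trans c')

lemma h2_bd {y : ℝ} (hy : 2.35 ≤ |y|) : |h2 y| ≤ 9.5 / |y| ^ 3 := by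
  have p : 0 < |y| := lt_of_lt_of_le (by norm_num) hy
  have a := abs_div_le (y := y) (k := 3) (bnd_N2 y)
  have b := abs_div_le (y := y) (k := 4) (cm 6 (by norm_num) (bnd_N1 y))
  have c := abs_div_le (y := y) (k := 5) (cm 12 (by norm_num) (bnd_N y))
  have b' := shiftpow (k := 3) 1 (show (0 : ℝ) ≤ 6 * 1.3 by norm_num) (by norm_num) hy
  have c' := shiftpow (k := 3) 2 (show (0 : ℝ) ≤ 12 * 1 by norm_num) (by norm_num) hy
  have d : 4 / |y| ^ 3 + 6 * 1.3 / 2.35 ^ 1 / |y| ^ 3 + 12 * 1 / 2.35 ^ 2 / |y| ^ 3 ≤ 9.5 / |y| ^ 3 := by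
    rw [← add_div, ← add_div]; gcongr; norm_num
  rw [h2_eq (abs_pos.1 p)]
  refine (abs_add_le _ _).trans ?_
  refine (add_le_add (abs_sub _ _) le_rfl).trans ?_
  refine le_trans ?_ d
  exact add_le_add (add_le_add a (b.trans b')) (c.trans c')

/-- monotonicity principle -/
lemma nonneg_of_deriv {g g' : ℝ → ℝ} (h0 : 0 ≤ g 0) (hd : ∀ x, HasDerivAt g (g' x) x)
    (hp : ∀ x, 0 ≤ x → 0 ≤ g' x) {x : ℝ} (hx : 0 ≤ x) : 0 ≤ g x := by
  have : MonotoneOn g (Set.Ici 0) := by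
    apply monotoneOn_of_deriv_nonneg (convex_Ici 0)
    · exact fun x _ => (hd x).continuousAt.continuousWithinAt
    · exact fun x _ => (hd x).differentiableAt.differentiableWithinAt
    · intro x hx
      rw [interior_Ici] at hx
      rw [(hd x).deriv]
      exact hp x (le_of_lt hx)
  exact h0.trans (this (Set.mem_Ici.2 le_rfl) hx hx)

lemma sin_lb {x : ℝ} (hx : 0 ≤ x) : x - x ^ 3 / 6 ≤ Real.sin x := by
  have := nonneg_of_deriv (g := fun x => Real.sin x - (x - x ^ 3 / 6)) (g' := fun x => Real.cos x - (1 - x ^ 2 / 2))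
    (by simp) (fun x => by
      refine ((Real.hasDerivAt_sin x).sub ((hasDerivAt_id x).sub (((hasDerivAt_id x).fun_pow 3).div_const 6))).congr_deriv ?_
      simp; ring) (fun x _ => by linarith [Real.one_sub_sq_div_two_le_cos (x := x)]) hx
  linarith

lemma cos_ub {x : ℝ} (hx : 0 ≤ x) : Real.cos x ≤ 1 - x ^ 2 / 2 + x ^ 4 / 24 := by
  have := nonneg_of_deriv (g := fun x => 1 - x ^ 2 / 2 + x ^ 4 / 24 - Real.cos x) (g' := fun x => Real.sin x - (x - x ^ 3 / 6))
    (by simp) (fun x => by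
      refine ((((hasDerivAt_const x 1).sub (((hasDerivAt_id x).fun_pow 2).div_const 2)).add
        (((hasDerivAt_id x).fun_pow 4).div_const 24)).sub (Real.hasDerivAt_cos x)).congr_deriv ?_
      simp; ring) (fun x hx => by linarith [sin_lb hx]) hx
  linarith

lemma sin_ub {x : ℝ} (hx : 0 ≤ x) : Real.sin x ≤ x - x ^ 3 / 6 + x ^ 5 / 120 := by
  have := nonneg_of_deriv (g := fun x => x - x ^ 3 / 6 + x ^ 5 / 120 - Real.sin x) (g' := fun x => 1 - x ^ 2 / 2 + x ^ 4 / 24 - Real.cos x)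
    (by simp) (fun x => by
      refine ((((hasDerivAt_id x).sub (((hasDerivAt_id x).fun_pow 3).div_const 6)).add
        (((hasDerivAt_id x).fun_pow 5).div_const 120)).sub (Real.hasDerivAt_sin x)).congr_deriv ?_
      simp; ring) (fun x hx => by linarith [cos_ub hx]) hx
  linarith

lemma sinc_abs (x : ℝ) : Real.sinc |x| = Real.sinc x := by
  rcases abs_choice x with h | h <;> rw [h]
  exact Real.sinc_neg x

lemma sinc_lb (x : ℝ) : 1 - x ^ 2 / 6 ≤ Real.sinc x := by
  rcases eq_or_ne x 0 with rfl | h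
  · simp
  have hp : 0 < |x| := abs_pos.2 h
  rw [← sinc_abs, Real.sinc_of_ne_zero hp.ne', le_div_iff₀ hp, ← sq_abs]
  nlinarith [sin_lb hp.le]

lemma sinc_ub (x : ℝ) : Real.sinc x ≤ 1 - x ^ 2 / 6 + x ^ 4 / 120 := by
  rcases eq_or_ne x 0 with rfl | h
  · simp
  have hp : 0 < |x| := abs_pos.2 h
  have e : x ^ 4 = |x| ^ 4 := by rw [← abs_pow, abs_of_nonneg (by positivity)]
  rw [← sinc_abs, Real.sinc_of_ne_zero hp.ne', div_le_iff₀ hp, ← sq_abs, e]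
  nlinarith [sin_ub hp.le]

lemma sinc_nonneg' {x : ℝ} (h : |x| ≤ 1.55) : 0 ≤ Real.sinc x := by
  have := sinc_lb x
  have h2 := sq_le_sq' (by linarith [abs_nonneg x]) h
  rw [sq_abs] at h2
  norm_num at h2
  linarith

lemma fK_nonneg (x : ℝ) : 0 ≤ fK x := by unfold fK; positivity
lemma fK_le_one (x : ℝ) : fK x ≤ 1 := by
  have h := Real.abs_sinc_le_one x
  have : fK x = |Real.sinc x| ^ 4 := by rw [fK, ← abs_pow, abs_of_nonneg (by positivity)]
  rw [this]; exact pow_le_one₀ (abs_nonneg _) h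

lemma fK_near {x : ℝ} (h : |x| ≤ 0.75) : fK x ≤ 1 - 0.55 * x ^ 2 := by
  have h2 : x ^ 2 ≤ 0.5625 := by
    have := sq_le_sq' (by linarith [abs_nonneg x]) h
    rw [sq_abs] at this; norm_num at this ⊢; linarith
  have a := sinc_ub x
  have p := sinc_nonneg' (h.trans (by norm_num))
  have e : x ^ 4 = (x ^ 2) ^ 2 := by ring
  have : fK x ≤ (1 - x ^ 2 / 6 + x ^ 4 / 120) ^ 4 := pow_le_pow_left₀ p a 4
  refine this.trans ?_
  rw [e]
  have hu := sq_nonneg x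
  generalize x ^ 2 = u at *
  have s1 : 1 - u / 6 + u ^ 2 / 120 ≤ 1 - 0.1619 * u := by nlinarith
  have s0 : 0 ≤ 1 - u / 6 + u ^ 2 / 120 := by nlinarith
  have s2 := pow_le_pow_left₀ s0 s1 4
  refine s2.trans ?_
  have : (1 - 0.1619 * u) ^ 2 ≤ 1 - 0.3090 * u := by nlinarith
  have s3 := pow_le_pow_left₀ (sq_nonneg _) this 2
  have e2 : (1 - 0.1619 * u) ^ 4 = ((1 - 0.1619 * u) ^ 2) ^ 2 := by ring
  rw [e2]
  refine s3.trans ?_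
  nlinarith

lemma fK_lb (x : ℝ) : 1 - (2 / 3) * x ^ 2 ≤ fK x := by
  by_cases h : x ^ 2 ≤ 6
  · have a := sinc_lb x
    have s := pow_le_pow_left₀ (by linarith) a 4
    refine le_trans ?_ s
    have hu := sq_nonneg x
    generalize x ^ 2 = u at *
    nlinarith [mul_nonneg hu hu, mul_nonneg (mul_nonneg hu hu) (sub_nonneg.2 h), sq_nonneg (u * (u - 6)), mul_nonneg hu (sq_nonneg (u - 6))]
  · linarith [fK_nonneg x]

lemma sinc_mid {x : ℝ} (h1 : 0.75 ≤ |x|) (h2 : |x| ≤ 1.55) : Real.sinc x ≤ 0.9089 := by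
  have a := sinc_ub x
  have e : x ^ 4 = (x ^ 2) ^ 2 := by ring
  have g1 : 0.5625 ≤ x ^ 2 := by
    have := pow_le_pow_left₀ (by norm_num) h1 2
    rw [sq_abs] at this; norm_num at this ⊢; linarith
  have g2 : x ^ 2 ≤ 2.4025 := by
    have := pow_le_pow_left₀ (abs_nonneg _) h2 2
    rw [sq_abs] at this; norm_num at this ⊢; linarith
  rw [e] at a
  generalize x ^ 2 = u at *
  nlinarith

lemma fK_mid {x : ℝ} (h1 : 0.75 ≤ |x|) (h2 : |x| ≤ 1.55) : fK x ≤ 0.6825 := by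
  have := pow_le_pow_left₀ (sinc_nonneg' h2) (sinc_mid h1 h2) 4
  exact this.trans (by norm_num)

lemma hK_mid {x : ℝ} (h1 : 0.75 ≤ |x|) (h2 : |x| ≤ 1.55) : |hK x| ≤ 0.751 := by
  have h0 : x ≠ 0 := by rintro rfl; norm_num at h1
  have e : hK x = Real.sin x * Real.sinc x ^ 3 := by
    rw [hK, Real.sinc_of_ne_zero h0]; field_simp
  have := pow_le_pow_left₀ (sinc_nonneg' h2) (sinc_mid h1 h2) 3
  have p := pow_nonneg (sinc_nonneg' h2) 3
  rw [e, abs_mul, abs_of_nonneg p]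
  calc _ ≤ 1 * Real.sinc x ^ 3 := by gcongr; exact Real.abs_sin_le_one x
    _ ≤ _ := by rw [one_mul]; exact this.trans (by norm_num)

/-- bound for `hK d - d` -/
lemma hK_sub {x : ℝ} (h : |x| ≤ 0.75) : |hK x - x| ≤ 0.5 * x ^ 2 := by
  have e : hK x - x = -(x * (1 - fK x)) := by rw [hK, fK]; ring
  rw [e, abs_neg, abs_mul, abs_of_nonneg (sub_nonneg.2 (fK_le_one x))]
  calc _ ≤ 0.75 * ((2 / 3) * x ^ 2) := by gcongr <;> linarith [fK_lb x, fK_le_one x]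
    _ = _ := by ring

/-- second order Taylor remainder -/
lemma taylor2 {g g1 g2 : ℝ → ℝ} {a d B : ℝ}
    (hg : ∀ s ∈ Set.Icc (0 : ℝ) 1, HasDerivAt g (g1 (a + s * d)) (a + s * d))
    (hg1 : ∀ s ∈ Set.Icc (0 : ℝ) 1, HasDerivAt g1 (g2 (a + s * d)) (a + s * d))
    (hB : ∀ s ∈ Set.Icc (0 : ℝ) 1, |g2 (a + s * d)| ≤ B) :
    |g (a + d) - g a - g1 a * d| ≤ B * d ^ 2 / 2 := by
  have mon : ∀ (ψ ψ' : ℝ → ℝ), (∀ s ∈ Set.Icc (0 : ℝ) 1, HasDerivAt ψ (ψ' s) s) →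
      (∀ s ∈ Set.Icc (0 : ℝ) 1, 0 ≤ ψ' s) → MonotoneOn ψ (Set.Icc 0 1) := by
    intro ψ ψ' h1 h2
    apply monotoneOn_of_deriv_nonneg (convex_Icc 0 1)
    · exact fun x hx => (h1 x hx).continuousAt.continuousWithinAt
    · exact fun x hx => (h1 x (interior_subset hx)).differentiableAt.differentiableWithinAt
    · intro x hx
      rw [(h1 x (interior_subset hx)).deriv]
      exact h2 x (interior_subset hx)
  have key : ∀ σ : ℝ, |σ| = 1 → σ * (g (a + d) - g a - g1 a * d) ≤ B * d ^ 2 / 2 := by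
    intro σ hσ
    have lin : ∀ s : ℝ, HasDerivAt (fun s => a + s * d) d s := by
      intro s
      refine (((hasDerivAt_id s).mul_const d).const_add a).congr_deriv (by simp)
    have m1 := mon (fun s => B * d ^ 2 * s - σ * d * g1 (a + s * d)) (fun s => B * d ^ 2 - σ * d * (g2 (a + s * d) * d))
      (fun s hs => by
        have h := (((hasDerivAt_id s).const_mul (B * d ^ 2)).sub (((hg1 s hs).comp s (lin s)).const_mul (σ * d)))
        refine h.congr_deriv ?_
        simp) (fun s hs => by
          have := hB s hs
          have h2 : σ * g2 (a + s * d) ≤ B := by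
            calc _ ≤ |σ * g2 (a + s * d)| := le_abs_self _
              _ ≤ B := by rw [abs_mul, hσ, one_mul]; exact this
          nlinarith [sq_nonneg d])
    have m2 := mon (fun s => B * d ^ 2 * s ^ 2 / 2 - σ * (g (a + s * d) - g1 a * (s * d)))
      (fun s => B * d ^ 2 * s - σ * (g1 (a + s * d) * d - g1 a * d))
      (fun s hs => by
        have h := (((((hasDerivAt_id s).fun_pow 2).const_mul (B * d ^ 2)).div_const 2).sub
          ((((hg s hs).comp s (lin s)).sub (((hasDerivAt_id s).mul_const d).const_mul (g1 a))).const_mul σ))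
        refine h.congr_deriv ?_
        simp; ring) (fun s hs => by
          have := m1 (show (0 : ℝ) ∈ Set.Icc (0 : ℝ) 1 by simp) hs hs.1
          simp only [zero_mul, add_zero, mul_zero] at this
          linarith)
    have := m2 (show (0 : ℝ) ∈ Set.Icc (0 : ℝ) 1 by simp) (show (1 : ℝ) ∈ Set.Icc (0 : ℝ) 1 by simp) zero_le_one
    simp only [zero_mul, add_zero, mul_zero, one_mul, one_pow, mul_one] at this
    norm_num at this
    linarith
  rw [abs_le]
  constructor
  · linarith [key (-1) (by simp)]
  · linarith [key 1 (by simp)]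
end

open scoped Real
open Complex

noncomputable section

/-- bound for one-sided separated sums of inverse powers `k+3` -/
def Zs (k : ℕ) (d : ℝ) : ℝ := 1 / d ^ (k + 3) + 1 / (6.2 * d * (d + 3.1) ^ (k + 1))

lemma zs_range (d : ℝ) (hd : 0 < d) (n : ℕ) :
    ∑ i ∈ Finset.range n, 1 / (d + 3.1 * (i + 1)) ^ 3 ≤
      1 / 6.2 * (1 / (d * (d + 3.1)) - 1 / ((d + 3.1 * n) * (d + 3.1 * (n + 1)))) := by
  induction n with
  | zero => simp
  | succ n ih =>
    rw [Finset.sum_range_succ]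
    have h : 1 / (d + 3.1 * ((n : ℝ) + 1)) ^ 3 ≤ 1 / 6.2 * (1 / ((d + 3.1 * n) * (d + 3.1 * (n + 1))) -
        1 / ((d + 3.1 * (n + 1)) * (d + 3.1 * (n + 1 + 1)))) := by
      set x : ℝ := d + 3.1 * (n + 1) with hx
      have h1 : d + 3.1 * (n : ℝ) = x - 3.1 := by rw [hx]; ring
      have h2 : d + 3.1 * ((n : ℝ) + 1 + 1) = x + 3.1 := by rw [hx]; ring
      have h3 : 3.1 < x := by
        have : (0 : ℝ) ≤ n := Nat.cast_nonneg n
        rw [hx]; nlinarith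
      rw [h1, h2]
      have e : 1 / 6.2 * (1 / ((x - 3.1) * x) - 1 / (x * (x + 3.1))) = 1 / ((x - 3.1) * x * (x + 3.1)) := by
        have : x - 3.1 ≠ 0 := by linarith
        have : x ≠ 0 := by linarith
        have : x + 3.1 ≠ 0 := by linarith
        field_simp
        ring
      rw [e]
      have : 0 < x - 3.1 := by linarith
      have : 0 < x := by linarith
      apply one_div_le_one_div_of_le (by positivity)
      nlinarith
    push_cast
    linarith

lemma zs_range' (k : ℕ) (d : ℝ) (hd : 0 < d) (n : ℕ) :
    ∑ i ∈ Finset.range n, 1 / (d + 3.1 * i) ^ (k + 3) ≤ Zs k d := by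
  rcases n with _ | n
  · simp only [Finset.range_zero, Finset.sum_empty]; unfold Zs; positivity
  rw [Finset.sum_range_succ']
  have h0 : (1 : ℝ) / (d + 3.1 * ((0 : ℕ) : ℝ)) ^ (k + 3) = 1 / d ^ (k + 3) := by simp
  rw [h0, Zs, add_comm]
  have h1 : ∑ i ∈ Finset.range n, 1 / (d + 3.1 * ((i + 1 : ℕ) : ℝ)) ^ (k + 3) ≤
      (1 / (d + 3.1) ^ k) * ∑ i ∈ Finset.range n, 1 / (d + 3.1 * ((i : ℝ) + 1)) ^ 3 := by
    rw [Finset.mul_sum]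
    apply Finset.sum_le_sum
    intro i _
    rw [one_div_mul_one_div]
    push_cast
    have : (0 : ℝ) ≤ i := Nat.cast_nonneg i
    apply one_div_le_one_div_of_le (by positivity)
    rw [pow_add]
    gcongr
    linarith
  have h2 := zs_range d hd n
  have h3 : ∑ i ∈ Finset.range n, 1 / (d + 3.1 * ((i : ℝ) + 1)) ^ 3 ≤ 1 / 6.2 * (1 / (d * (d + 3.1))) := by
    refine h2.trans ?_
    have : 0 ≤ 1 / ((d + 3.1 * (n : ℝ)) * (d + 3.1 * (n + 1))) := by positivity
    linarith
  have h4 : (1 / (d + 3.1) ^ k) * (1 / 6.2 * (1 / (d * (d + 3.1)))) = 1 / (6.2 * d * (d + 3.1) ^ (k + 1)) := by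
    rw [pow_succ]; field_simp
  have h5 : 0 ≤ 1 / (d + 3.1) ^ k := by positivity
  have h6 := mul_le_mul_of_nonneg_left h3 h5
  rw [h4] at h6
  linarith

lemma one_side {ι : Type*} (s : Finset ι) (X : ι → ℝ) (k : ℕ) (d : ℝ) (hd : 0 < d)
    (sep : ∀ i ∈ s, ∀ j ∈ s, i ≠ j → 3.1 ≤ |X i - X j|) (hX : ∀ i ∈ s, d ≤ X i) :
    ∑ i ∈ s, 1 / (X i) ^ (k + 3) ≤ Zs k d := by
  classical
  set n : ι → ℕ := fun i => ⌊(X i - d) / 3.1⌋₊ with hn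
  have hlow : ∀ i ∈ s, d + 3.1 * (n i : ℝ) ≤ X i := by
    intro i hi
    have := Nat.floor_le (show 0 ≤ (X i - d) / 3.1 from div_nonneg (by linarith [hX i hi]) (by norm_num))
    rw [le_div_iff₀ (by norm_num)] at this
    simp only [hn]
    linarith
  have hhigh : ∀ i, X i < d + 3.1 * (n i : ℝ) + 3.1 := by
    intro i
    have := Nat.lt_floor_add_one ((X i - d) / 3.1)
    rw [div_lt_iff₀ (by norm_num)] at this
    simp only [hn]
    linarith
  have inj : Set.InjOn n s := by
    intro i hi j hj hij
    by_contra hne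
    have h1 := sep i hi j hj hne
    have a := hlow i hi
    have b := hlow j hj
    have c := hhigh i
    have e := hhigh j
    rw [hij] at a c
    rw [le_abs] at h1
    rcases h1 with h1 | h1 <;> linarith
  calc ∑ i ∈ s, 1 / (X i) ^ (k + 3) ≤ ∑ i ∈ s, 1 / (d + 3.1 * (n i : ℝ)) ^ (k + 3) := by
        apply Finset.sum_le_sum
        intro i hi
        apply one_div_le_one_div_of_le (by positivity)
        exact pow_le_pow_left₀ (by positivity) (hlow i hi) _
    _ = ∑ m ∈ s.image n, 1 / (d + 3.1 * (m : ℝ)) ^ (k + 3) := by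
        rw [Finset.sum_image inj]
    _ ≤ ∑ m ∈ Finset.range ((s.image n).sup id + 1), 1 / (d + 3.1 * (m : ℝ)) ^ (k + 3) := by
        apply Finset.sum_le_sum_of_subset_of_nonneg
        · intro m hm
          rw [Finset.mem_range]
          exact Nat.lt_succ_of_le (Finset.le_sup (f := id) hm)
        · intros; positivity
    _ ≤ _ := zs_range' k d hd _

/-- distance from `y` to the interval `[cL,cR]` when outside -/
def Dd (cL cR y : ℝ) : ℝ := max (y - cR) (cL - y)

lemma two_side {ι : Type*} (s : Finset ι) (Y : ι → ℝ) (k : ℕ) {d1 d2 cL cR : ℝ} (hd1 : 0 < d1) (hd2 : 0 < d2)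
    (hc : cL ≤ cR)
    (sep : ∀ i j, i ≠ j → 3.1 ≤ |Y i - Y j|) (hX : ∀ i ∈ s, cR + d1 ≤ Y i ∨ Y i ≤ cL - d2) :
    ∑ i ∈ s, 1 / (Dd cL cR (Y i)) ^ (k + 3) ≤ Zs k d1 + Zs k d2 := by
  classical
  rw [← Finset.sum_filter_add_sum_filter_not s (fun i => cR + d1 ≤ Y i)]
  apply add_le_add
  · have := one_side (s.filter (fun i => cR + d1 ≤ Y i)) (fun i => Y i - cR) k d1 hd1
      (fun i _ j _ hij => by simpa using sep i j hij)
      (fun i hi => by have := (Finset.mem_filter.1 hi).2; linarith)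
    refine le_trans (Finset.sum_le_sum ?_) this
    intro i hi
    have h := (Finset.mem_filter.1 hi).2
    rw [Dd, max_eq_left (by linarith)]
  · have := one_side (s.filter (fun i => ¬ cR + d1 ≤ Y i)) (fun i => cL - Y i) k d2 hd2
      (fun i _ j _ hij => by have := sep j i hij.symm; simpa using this)
      (fun i hi => by
        have h := (Finset.mem_filter.1 hi)
        rcases hX i h.1 with h' | h'
        · exact absurd h' h.2
        · linarith)
    refine le_trans (Finset.sum_le_sum ?_) this
    intro i hi
    have h := (Finset.mem_filter.1 hi)
    have h2 : Y i ≤ cL - d2 := by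
      rcases hX i h.1 with h' | h'
      · exact absurd h' h.2
      · exact h'
    rw [Dd, max_eq_right (by linarith)]

lemma sum_of_two_side {ι : Type*} (F : ι → ℂ) (D : ι → ℝ) {P Q z1 z0 : ℝ} (hP : 0 ≤ P) (hQ : 0 ≤ Q)
    (i0 : Option ι) (h0 : ∀ i, i0 = some i → F i = 0)
    (hF : ∀ i, i0 ≠ some i → ‖F i‖ ≤ P * (1 / D i ^ 4) + Q * (1 / D i ^ 3))
    (hz1 : ∀ s : Finset ι, (∀ i ∈ s, i0 ≠ some i) → ∑ i ∈ s, 1 / D i ^ 4 ≤ z1)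
    (hz0 : ∀ s : Finset ι, (∀ i ∈ s, i0 ≠ some i) → ∑ i ∈ s, 1 / D i ^ 3 ≤ z0) :
    Summable F ∧ ‖∑' i, F i‖ ≤ P * z1 + Q * z0 := by
  classical
  have hs : ∀ s : Finset ι, ∑ i ∈ s, ‖F i‖ ≤ P * z1 + Q * z0 := by
    intro s
    set s' := s.filter (fun i => i0 ≠ some i) with hs'
    have hm : ∀ i ∈ s', i0 ≠ some i := fun i hi => (Finset.mem_filter.1 hi).2
    calc ∑ i ∈ s, ‖F i‖ = ∑ i ∈ s', ‖F i‖ := by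
          symm
          apply Finset.sum_subset (Finset.filter_subset _ _)
          intro i hi hi'
          have : i0 = some i := by
            by_contra h
            exact hi' (Finset.mem_filter.2 ⟨hi, h⟩)
          rw [h0 i this, norm_zero]
      _ ≤ ∑ i ∈ s', (P * (1 / D i ^ 4) + Q * (1 / D i ^ 3)) := Finset.sum_le_sum fun i hi => hF i (hm i hi)
      _ = P * ∑ i ∈ s', (1 / D i ^ 4) + Q * ∑ i ∈ s', (1 / D i ^ 3) := by
          rw [Finset.sum_add_distrib, Finset.mul_sum, Finset.mul_sum]
      _ ≤ _ := add_le_add (mul_le_mul_of_nonneg_left (hz1 s' hm) hP) (mul_le_mul_of_nonneg_left (hz0 s' hm) hQ)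
  have hsum : Summable (fun i => ‖F i‖) := summable_of_sum_le (fun i => norm_nonneg _) hs
  exact ⟨hsum.of_norm, (norm_tsum_le_tsum_norm hsum).trans (hsum.tsum_le_of_sum_le hs)⟩

lemma near_geom {ι : Type*} {Y : ι → ℝ} (sep : ∀ i j, i ≠ j → 3.1 ≤ |Y i - Y j|) (i0 : ι) {x e : ℝ}
    (hx : |x - Y i0| ≤ e) (i : ι) (hi : i ≠ i0) :
    (Y i0 ≤ x → (max x (Y i0) + (3.1 - e) ≤ Y i ∨ Y i ≤ min x (Y i0) - 3.1)) ∧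
    (x ≤ Y i0 → (max x (Y i0) + 3.1 ≤ Y i ∨ Y i ≤ min x (Y i0) - (3.1 - e))) := by
  have h := sep i i0 hi
  rw [abs_le] at hx
  rw [le_abs] at h
  constructor
  · intro h'
    rw [max_eq_left h', min_eq_right h']
    rcases h with h | h
    · left; linarith
    · right; linarith
  · intro h'
    rw [max_eq_right h', min_eq_left h']
    rcases h with h | h
    · left; linarith
    · right; linarith

lemma near_D {ι : Type*} {Y : ι → ℝ} (sep : ∀ i j, i ≠ j → 3.1 ≤ |Y i - Y j|) (i0 : ι) {x e : ℝ}
    (hx : |x - Y i0| ≤ e) (i : ι) (hi : i ≠ i0) : 3.1 - e ≤ Dd (min x (Y i0)) (max x (Y i0)) (Y i) := by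
  have h := near_geom sep i0 hx i hi
  have h0 := (abs_nonneg _).trans hx
  rw [Dd, le_max_iff]
  rcases le_total (Y i0) x with h' | h'
  · rcases h.1 h' with h | h
    · left; linarith
    · right; linarith
  · rcases h.2 h' with h | h
    · left; linarith
    · right; linarith

lemma near_sum {ι : Type*} {Y : ι → ℝ} (sep : ∀ i j, i ≠ j → 3.1 ≤ |Y i - Y j|) (i0 : ι) {x e : ℝ}
    (hx : |x - Y i0| ≤ e) (he : e < 3.1) (F : ι → ℂ) {P Q : ℝ} (hP : 0 ≤ P) (hQ : 0 ≤ Q) (h0 : F i0 = 0)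
    (hF : ∀ i, i ≠ i0 → ‖F i‖ ≤ P * (1 / Dd (min x (Y i0)) (max x (Y i0)) (Y i) ^ 4)
      + Q * (1 / Dd (min x (Y i0)) (max x (Y i0)) (Y i) ^ 3)) :
    Summable F ∧ ‖∑' i, F i‖ ≤ P * (Zs 1 (3.1 - e) + Zs 1 3.1) + Q * (Zs 0 (3.1 - e) + Zs 0 3.1) := by
  have key : ∀ k, ∀ s : Finset ι, (∀ i ∈ s, some i0 ≠ some i) →
      ∑ i ∈ s, 1 / Dd (min x (Y i0)) (max x (Y i0)) (Y i) ^ (k + 3) ≤ Zs k (3.1 - e) + Zs k 3.1 := by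
    intro k s hs
    rcases le_total (Y i0) x with h' | h'
    · exact two_side s Y k (by linarith) (by norm_num) min_le_max sep
        (fun i hi => (near_geom sep i0 hx i (fun h => hs i hi (by rw [h]))).1 h')
    · rw [add_comm (Zs k (3.1 - e))]
      exact two_side s Y k (by norm_num) (by linarith) min_le_max sep
        (fun i hi => (near_geom sep i0 hx i (fun h => hs i hi (by rw [h]))).2 h')
  refine sum_of_two_side F _ hP hQ (some i0) ?_ ?_ (key 1) (key 0)
  · intro i hi; cases hi; exact h0
  · intro i hi; exact hF i (fun h => hi (by rw [h]))

lemma far_sum {ι : Type*} {Y : ι → ℝ} (sep : ∀ i j, i ≠ j → 3.1 ≤ |Y i - Y j|) {x e : ℝ}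
    (he : 0 < e) (hx : ∀ i, e ≤ |x - Y i|) (F : ι → ℂ) {P Q : ℝ} (hP : 0 ≤ P) (hQ : 0 ≤ Q)
    (hF : ∀ i, ‖F i‖ ≤ P * (1 / |x - Y i| ^ 4) + Q * (1 / |x - Y i| ^ 3)) :
    Summable F ∧ ‖∑' i, F i‖ ≤ P * (Zs 1 e + Zs 1 e) + Q * (Zs 0 e + Zs 0 e) := by
  have eD : ∀ i, Dd x x (Y i) = |x - Y i| := by
    intro i
    rw [Dd, abs_sub_comm, abs_eq_max_neg, neg_sub]
  have key : ∀ k, ∀ s : Finset ι, (∀ i ∈ s, none ≠ some i) →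
      ∑ i ∈ s, 1 / Dd x x (Y i) ^ (k + 3) ≤ Zs k e + Zs k e := by
    intro k s hs
    refine two_side s Y k he he le_rfl sep ?_
    intro i hi
    have := hx i
    rw [le_abs] at this
    rcases this with h | h
    · right; linarith
    · left; linarith
  refine sum_of_two_side F _ hP hQ none (by simp) ?_ (key 1) (key 0)
  intro i _
  rw [eD]
  exact hF i

lemma Dd_le {cL cR y x : ℝ} (h1 : cL ≤ x) (h2 : x ≤ cR) : Dd cL cR y ≤ |x - y| := by
  rw [Dd, abs_sub_comm, abs_eq_max_neg, neg_sub]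
  exact max_le_max (by linarith) (by linarith)

lemma Z1_31 : Zs 1 3.1 ≤ 0.01219 := by norm_num [Zs]
lemma Z0_31 : Zs 0 3.1 ≤ 0.04196 := by norm_num [Zs]
lemma Z1_235 : Zs 1 (3.1 - 0.75) ≤ 0.03511 := by norm_num [Zs]
lemma Z0_235 : Zs 0 (3.1 - 0.75) ≤ 0.0897 := by norm_num [Zs]
lemma Z1_155 : Zs 1 1.55 ≤ 0.1781 := by norm_num [Zs]
lemma Z0_155 : Zs 0 1.55 ≤ 0.29092 := by norm_num [Zs]
end

open scoped Real
open Complex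

noncomputable section

lemma near_sum' {ι : Type*} {Y : ι → ℝ} (sep : ∀ i j, i ≠ j → 3.1 ≤ |Y i - Y j|) (i0 : ι) {x e : ℝ}
    (hx : |x - Y i0| ≤ e) (he : e < 3.1) (F : ι → ℂ) {P Q : ℝ} (hP : 0 ≤ P) (hQ : 0 ≤ Q)
    (hF : ∀ i, i ≠ i0 → ‖F i‖ ≤ P * (1 / Dd (min x (Y i0)) (max x (Y i0)) (Y i) ^ 4)
      + Q * (1 / Dd (min x (Y i0)) (max x (Y i0)) (Y i) ^ 3)) :
    Summable F ∧ ‖∑' i, F i - F i0‖ ≤ P * (Zs 1 (3.1 - e) + Zs 1 3.1) + Q * (Zs 0 (3.1 - e) + Zs 0 3.1) := by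
  classical
  have h := near_sum sep i0 hx he (Function.update F i0 0) hP hQ (by simp)
    (fun i hi => by rw [Function.update_of_ne hi]; exact hF i hi)
  have hs := h.1.hasSum.update i0 (F i0)
  rw [Function.update_idem, Function.update_eq_self, Function.update_self] at hs
  refine ⟨hs.summable, ?_⟩
  rw [hs.tsum_eq]
  have e : F i0 - 0 + ∑' i, Function.update F i0 0 i - F i0 = ∑' i, Function.update F i0 0 i := by ring
  rw [e]
  exact h.2

/-- combination of two kernels -/
def comb {ι : Type*} (α β : ι → ℂ) (Y : ι → ℝ) (g h : ℝ → ℝ) (x : ℝ) (i : ι) : ℂ :=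
  α i * (g (x - Y i) : ℂ) + β i * (h (x - Y i) : ℂ)

lemma norm_lin {α β : ℂ} {a b g h G H : ℝ} (ha : ‖α‖ ≤ a) (hb : ‖β‖ ≤ b) (hg : |g| ≤ G) (hh : |h| ≤ H) :
    ‖α * (g : ℂ) + β * (h : ℂ)‖ ≤ a * G + b * H := by
  refine (norm_add_le _ _).trans ?_
  rw [norm_mul, norm_mul, Complex.norm_real, Complex.norm_real, Real.norm_eq_abs, Real.norm_eq_abs]
  have := norm_nonneg α
  have := norm_nonneg β
  have := abs_nonneg g
  have := abs_nonneg h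
  gcongr <;> linarith

lemma inv_pow_le {A D y : ℝ} {k : ℕ} (hA : 0 ≤ A) (hD : 0 < D) (h : D ≤ y) : A / y ^ k ≤ A * (1 / D ^ k) := by
  rw [mul_one_div]
  gcongr

/-- values at a point within `e` of a node, excluding that node -/
lemma comb_sum {ι : Type*} {Y : ι → ℝ} (sep : ∀ i j, i ≠ j → 3.1 ≤ |Y i - Y j|) {α β : ι → ℂ} {a b : ℝ}
    (ha : ∀ i, ‖α i‖ ≤ a) (hb : ∀ i, ‖β i‖ ≤ b) {g h : ℝ → ℝ} {A B e : ℝ} (hA : 0 ≤ A) (hB : 0 ≤ B)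
    (he : e < 3.1)
    (hg : ∀ y, 3.1 - e ≤ |y| → |g y| ≤ A / |y| ^ 4) (hh : ∀ y, 3.1 - e ≤ |y| → |h y| ≤ B / |y| ^ 3)
    (i0 : ι) {x : ℝ} (hx : |x - Y i0| ≤ e) :
    Summable (comb α β Y g h x) ∧ ‖∑' i, comb α β Y g h x i - comb α β Y g h x i0‖ ≤
      a * A * (Zs 1 (3.1 - e) + Zs 1 3.1) + b * B * (Zs 0 (3.1 - e) + Zs 0 3.1) := by
  have a0 : 0 ≤ a := (norm_nonneg _).trans (ha i0)
  have b0 : 0 ≤ b := (norm_nonneg _).trans (hb i0)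
  refine near_sum' sep i0 hx he _ (by positivity) (by positivity) ?_
  intro i hi
  have hD := near_D sep i0 hx i hi
  have hD0 : 0 < Dd (min x (Y i0)) (max x (Y i0)) (Y i) := by linarith
  have hle : Dd (min x (Y i0)) (max x (Y i0)) (Y i) ≤ |x - Y i| := Dd_le (min_le_left _ _) (le_max_left _ _)
  have := norm_lin (ha i) (hb i) ((hg _ (hD.trans hle)).trans (inv_pow_le hA hD0 hle))
    ((hh _ (hD.trans hle)).trans (inv_pow_le hB hD0 hle))
  rw [comb, mul_assoc, mul_assoc]
  exact this

lemma comb_summable {ι : Type*} {Y : ι → ℝ} (sep : ∀ i j, i ≠ j → 3.1 ≤ |Y i - Y j|) {α β : ι → ℂ} {a b : ℝ}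
    (ha : ∀ i, ‖α i‖ ≤ a) (hb : ∀ i, ‖β i‖ ≤ b) (x : ℝ) : Summable (comb α β Y fK hK x) := by
  by_cases h : ∃ i0, |x - Y i0| ≤ 1.55
  · obtain ⟨i0, hi⟩ := h
    exact (comb_sum sep ha hb zero_le_one zero_le_one (by norm_num)
      (fun y hy => fK_bd (abs_pos.1 (lt_of_lt_of_le (by norm_num) hy)))
      (fun y hy => hK_bd (abs_pos.1 (lt_of_lt_of_le (by norm_num) hy))) i0 hi).1
  · push Not at h
    rcases isEmpty_or_nonempty ι with hι | ⟨⟨i0⟩⟩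
    · exact hasSum_empty.summable
    have a0 : 0 ≤ a := (norm_nonneg _).trans (ha i0)
    have b0 : 0 ≤ b := (norm_nonneg _).trans (hb i0)
    refine (far_sum sep (x := x) (e := 1.55) (by norm_num) (fun i => (h i).le) _ a0 b0 ?_).1
    intro i
    have hp : x - Y i ≠ 0 := abs_pos.1 (lt_of_lt_of_le (by norm_num) (h i).le)
    exact norm_lin (ha i) (hb i) (fK_bd hp) (hK_bd hp)

lemma comb_far {ι : Type*} {Y : ι → ℝ} (sep : ∀ i j, i ≠ j → 3.1 ≤ |Y i - Y j|) {α β : ι → ℂ} {a b : ℝ}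
    (a0 : 0 ≤ a) (b0 : 0 ≤ b)
    (ha : ∀ i, ‖α i‖ ≤ a) (hb : ∀ i, ‖β i‖ ≤ b) (x : ℝ) (h : ∀ i, 1.55 ≤ |x - Y i|) :
    ‖∑' i, comb α β Y fK hK x i‖ ≤ a * (Zs 1 1.55 + Zs 1 1.55) + b * (Zs 0 1.55 + Zs 0 1.55) := by
  refine (far_sum sep (x := x) (e := 1.55) (by norm_num) h _ a0 b0 ?_).2
  intro i
  have hp : x - Y i ≠ 0 := abs_pos.1 (lt_of_lt_of_le (by norm_num) (h i))
  exact norm_lin (ha i) (hb i) (fK_bd hp) (hK_bd hp)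

lemma comb_row0 {ι : Type*} {Y : ι → ℝ} (sep : ∀ i j, i ≠ j → 3.1 ≤ |Y i - Y j|) {α β : ι → ℂ} {a b : ℝ}
    (ha : ∀ i, ‖α i‖ ≤ a) (hb : ∀ i, ‖β i‖ ≤ b) (i0 : ι) :
    Summable (comb α β Y fK hK (Y i0)) ∧ ‖∑' i, comb α β Y fK hK (Y i0) i - α i0‖ ≤
      0.02438 * a + 0.08392 * b := by
  have a0 : 0 ≤ a := (norm_nonneg _).trans (ha i0)
  have b0 : 0 ≤ b := (norm_nonneg _).trans (hb i0)
  have h := comb_sum sep ha hb zero_le_one zero_le_one (e := 0) (by norm_num)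
      (fun y hy => fK_bd (abs_pos.1 (lt_of_lt_of_le (by norm_num) hy)))
      (fun y hy => hK_bd (abs_pos.1 (lt_of_lt_of_le (by norm_num) hy))) i0 (x := Y i0) (by simp)
  refine ⟨h.1, ?_⟩
  have e : comb α β Y fK hK (Y i0) i0 = α i0 := by simp [comb, fK_zero, hK_zero]
  have h2 := h.2
  rw [e, sub_zero] at h2
  refine h2.trans ?_
  nlinarith [Z1_31, Z0_31]

lemma comb_row1 {ι : Type*} {Y : ι → ℝ} (sep : ∀ i j, i ≠ j → 3.1 ≤ |Y i - Y j|) {α β : ι → ℂ} {a b : ℝ}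
    (ha : ∀ i, ‖α i‖ ≤ a) (hb : ∀ i, ‖β i‖ ≤ b) (i0 : ι) :
    Summable (comb α β Y f1 h1 (Y i0)) ∧ ‖∑' i, comb α β Y f1 h1 (Y i0) i - β i0‖ ≤
      0.0634 * a + 0.1906 * b := by
  have a0 : 0 ≤ a := (norm_nonneg _).trans (ha i0)
  have b0 : 0 ≤ b := (norm_nonneg _).trans (hb i0)
  have h := comb_sum sep ha hb (A := 2.6) (B := 2.27) (by norm_num) (by norm_num) (e := 0) (by norm_num)
      (fun y hy => f1_bd (by linarith)) (fun y hy => h1_bd (by linarith)) i0 (x := Y i0) (by simp)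
  refine ⟨h.1, ?_⟩
  have e : comb α β Y f1 h1 (Y i0) i0 = β i0 := by simp [comb, f1_zero, h1_zero]
  have h2 := h.2
  rw [e, sub_zero] at h2
  refine h2.trans ?_
  nlinarith [Z1_31, Z0_31]

lemma solve {R : ℕ} {Y : Fin R × ℤ → ℝ} (sep : ∀ i j, i ≠ j → 3.1 ≤ |Y i - Y j|) (v w : Fin R → ℂ) {V W : ℝ}
    (hV : 0 ≤ V) (hW : 0 ≤ W)
    (hv : ∀ j, ‖v j‖ ≤ V) (hw : ∀ j, ‖w j‖ ≤ W) :
    ∃ (α β : Fin R → ℂ) (a b : ℝ), 0 ≤ a ∧ 0 ≤ b ∧ (∀ j, ‖α j‖ ≤ a) ∧ (∀ j, ‖β j‖ ≤ b) ∧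
      (∀ j, ∑' i : Fin R × ℤ, comb (fun i => α i.1) (fun i => β i.1) Y fK hK (Y (j, 0)) i = v j) ∧
      (∀ j, ∑' i : Fin R × ℤ, comb (fun i => α i.1) (fun i => β i.1) Y f1 h1 (Y (j, 0)) i = w j) ∧
      (∀ j, ‖α j - v j‖ ≤ 0.02438 * a + 0.08392 * b) ∧
      a ≤ V + (0.02438 * a + 0.08392 * b) ∧ b ≤ W + (0.0634 * a + 0.1906 * b) := by
  classical
  have nb : ∀ (α : Fin R → ℂ) (i : Fin R × ℤ), ‖α i.1‖ ≤ ‖α‖ := fun α i => norm_le_pi_norm α i.1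
  have lin : ∀ (g h : ℝ → ℝ), (∀ (α β : Fin R → ℂ) (j : Fin R),
      Summable (comb (fun i : Fin R × ℤ => α i.1) (fun i => β i.1) Y g h (Y (j, 0)))) →
      ∃ T : ((Fin R → ℂ) × (Fin R → ℂ)) →ₗ[ℂ] (Fin R → ℂ), ∀ α β j, T (α, β) j =
        ∑' i : Fin R × ℤ, comb (fun i => α i.1) (fun i => β i.1) Y g h (Y (j, 0)) i := by
    intro g h hs
    refine ⟨{ toFun := fun p j => ∑' i : Fin R × ℤ, comb (fun i => p.1 i.1) (fun i => p.2 i.1) Y g h (Y (j, 0)) i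
              map_add' := ?_
              map_smul' := ?_ }, fun α β j => rfl⟩
    · intro p q
      ext j
      simp only [Pi.add_apply]
      rw [← (hs p.1 p.2 j).tsum_add (hs q.1 q.2 j)]
      congr 1
      ext i
      simp [comb]
      ring
    · intro c p
      ext j
      simp only [Pi.smul_apply, smul_eq_mul, RingHom.id_apply]
      rw [← tsum_mul_left]
      congr 1
      ext i
      simp [comb]
      ring
  obtain ⟨T0, hT0⟩ := lin fK hK (fun α β j => (comb_row0 sep (nb α) (nb β) (j, 0)).1)
  obtain ⟨T1, hT1⟩ := lin f1 h1 (fun α β j => (comb_row1 sep (nb α) (nb β) (j, 0)).1)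
  have r0 : ∀ α β j, ‖α j - T0 (α, β) j‖ ≤ 0.02438 * ‖α‖ + 0.08392 * ‖β‖ := by
    intro α β j
    rw [hT0, norm_sub_rev]
    exact (comb_row0 sep (nb α) (nb β) (j, 0)).2
  have r1 : ∀ α β j, ‖β j - T1 (α, β) j‖ ≤ 0.0634 * ‖α‖ + 0.1906 * ‖β‖ := by
    intro α β j
    rw [hT1, norm_sub_rev]
    exact (comb_row1 sep (nb α) (nb β) (j, 0)).2
  have est : ∀ α β V W, 0 ≤ V → 0 ≤ W → (∀ j, ‖T0 (α, β) j‖ ≤ V) → (∀ j, ‖T1 (α, β) j‖ ≤ W) →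
      ‖α‖ ≤ V + (0.02438 * ‖α‖ + 0.08392 * ‖β‖) ∧ ‖β‖ ≤ W + (0.0634 * ‖α‖ + 0.1906 * ‖β‖) := by
    intro α β V W hV hW h0 h1
    have na := norm_nonneg α
    have nb := norm_nonneg β
    constructor
    · rw [pi_norm_le_iff_of_nonneg (by positivity)]
      intro j
      have e : α j = T0 (α, β) j + (α j - T0 (α, β) j) := by ring
      rw [e]
      exact (norm_add_le _ _).trans (add_le_add (h0 j) (r0 α β j))
    · rw [pi_norm_le_iff_of_nonneg (by positivity)]
      intro j
      have e : β j = T1 (α, β) j + (β j - T1 (α, β) j) := by ring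
      rw [e]
      exact (norm_add_le _ _).trans (add_le_add (h1 j) (r1 α β j))
  have inj : Function.Injective (T0.prod T1) := by
    rw [← LinearMap.ker_eq_bot, LinearMap.ker_eq_bot']
    rintro ⟨α, β⟩ h
    have h0 : T0 (α, β) = 0 := congrArg Prod.fst h
    have h1 : T1 (α, β) = 0 := congrArg Prod.snd h
    have := est α β 0 0 le_rfl le_rfl (by simp [h0]) (by simp [h1])
    have na := norm_nonneg α
    have nb := norm_nonneg β
    have za : ‖α‖ = 0 := by linarith [this.1, this.2]
    have zb : ‖β‖ = 0 := by linarith [this.1, this.2]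
    rw [norm_eq_zero] at za zb
    rw [za, zb]; rfl
  have surj := LinearMap.injective_iff_surjective.1 inj
  obtain ⟨⟨α, β⟩, h⟩ := surj (v, w)
  have h0 : T0 (α, β) = v := congrArg Prod.fst h
  have h1 : T1 (α, β) = w := congrArg Prod.snd h
  have E := est α β V W hV hW (by rw [h0]; exact hv) (by rw [h1]; exact hw)
  refine ⟨α, β, ‖α‖, ‖β‖, norm_nonneg _, norm_nonneg _, norm_le_pi_norm α, norm_le_pi_norm β, ?_, ?_, ?_, E.1, E.2⟩
  · intro j; rw [← hT0, h0]
  · intro j; rw [← hT1, h1]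
  · intro j
    have := r0 α β j
    rwa [h0] at this

end

open scoped Real
open Complex

noncomputable section

lemma seg_mem {u v s : ℝ} (hs : s ∈ Set.Icc (0 : ℝ) 1) : min (u + v) u ≤ u + s * v ∧ u + s * v ≤ max (u + v) u := by
  obtain ⟨h0, h1⟩ := hs
  rcases le_total 0 v with h | h
  · exact ⟨(min_le_right _ _).trans (by nlinarith), le_trans (by nlinarith) (le_max_left _ _)⟩
  · exact ⟨(min_le_left _ _).trans (by nlinarith), le_trans (by nlinarith) (le_max_right _ _)⟩

/-- Taylor remainder of the far part near a node -/
lemma comb_near {ι : Type*} {Y : ι → ℝ} (sep : ∀ i j, i ≠ j → 3.1 ≤ |Y i - Y j|) {α β : ι → ℂ} {a b : ℝ}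
    (ha : ∀ i, ‖α i‖ ≤ a) (hb : ∀ i, ‖β i‖ ≤ b) (i0 : ι) {d : ℝ} (hd : |d| ≤ 0.75) :
    ‖∑' i, comb α β Y fK hK (Y i0 + d) i - ∑' i, comb α β Y fK hK (Y i0) i
      - (∑' i, comb α β Y f1 h1 (Y i0) i) * d - (α i0 * ((fK d - 1 : ℝ) : ℂ) + β i0 * ((hK d - d : ℝ) : ℂ))‖
      ≤ (0.2862 * a + 0.6254 * b) * d ^ 2 := by
  have a0 : 0 ≤ a := (norm_nonneg _).trans (ha i0)
  have b0 : 0 ≤ b := (norm_nonneg _).trans (hb i0)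
  set x := Y i0 + d with hxd
  have hx : |x - Y i0| ≤ 0.75 := by rw [hxd]; simpa using hd
  have s0 := comb_summable sep ha hb x
  have s1 := comb_summable sep ha hb (Y i0)
  have s2 := (comb_row1 sep ha hb i0).1
  set F : ι → ℂ := fun i => comb α β Y fK hK x i - comb α β Y fK hK (Y i0) i - comb α β Y f1 h1 (Y i0) i * d with hF
  have hsum : ∑' i, F i = ∑' i, comb α β Y fK hK x i - ∑' i, comb α β Y fK hK (Y i0) i
      - (∑' i, comb α β Y f1 h1 (Y i0) i) * d := by
    rw [← tsum_mul_right, ← s0.tsum_sub s1, ← (s0.sub s1).tsum_sub (s2.mul_right _)]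
  have h0 : F i0 = α i0 * ((fK d - 1 : ℝ) : ℂ) + β i0 * ((hK d - d : ℝ) : ℂ) := by
    simp only [hF, comb, hxd, sub_self, add_sub_cancel_left, fK_zero, hK_zero, f1_zero, h1_zero]
    push_cast
    ring
  rw [← hsum, ← h0]
  have key := (near_sum' sep i0 hx (by norm_num) F (P := a * (12.1 * d ^ 2 / 2)) (Q := b * (9.5 * d ^ 2 / 2))
    (by positivity) (by positivity) ?_).2
  · refine key.trans ?_
    have q1 : Zs 1 (3.1 - 0.75) + Zs 1 3.1 ≤ 0.0473 := by linarith [Z1_235, Z1_31]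
    have q0 : Zs 0 (3.1 - 0.75) + Zs 0 3.1 ≤ 0.13166 := by linarith [Z0_235, Z0_31]
    have p1 := mul_le_mul_of_nonneg_left q1 (show 0 ≤ a * (12.1 * d ^ 2 / 2) by positivity)
    have p0 := mul_le_mul_of_nonneg_left q0 (show 0 ≤ b * (9.5 * d ^ 2 / 2) by positivity)
    have := mul_nonneg a0 (sq_nonneg d)
    have := mul_nonneg b0 (sq_nonneg d)
    linarith
  · intro i hi
    set D := Dd (min x (Y i0)) (max x (Y i0)) (Y i) with hD'
    have hD := near_D sep i0 hx i hi
    rw [← hD'] at hD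
    have hD0 : 0 < D := by linarith
    have hseg : ∀ s ∈ Set.Icc (0 : ℝ) 1, D ≤ |(Y i0 - Y i) + s * d| := by
      intro s hs
      have := seg_mem (u := Y i0) (v := d) hs
      have h := Dd_le (y := Y i) this.1 this.2
      have e : Y i0 - Y i + s * d = Y i0 + s * d - Y i := by ring
      rw [e]
      exact h
    have hne : ∀ s ∈ Set.Icc (0 : ℝ) 1, (Y i0 - Y i) + s * d ≠ 0 := fun s hs =>
      abs_pos.1 (hD0.trans_le (hseg s hs))
    have ta := taylor2 (g := fK) (g1 := f1) (g2 := f2) (a := Y i0 - Y i) (d := d) (B := 12.1 * (1 / D ^ 4))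
      (fun s hs => hasDeriv_fK (hne s hs)) (fun s hs => hasDeriv_f1 (hne s hs))
      (fun s hs => (f2_bd (by linarith [hseg s hs])).trans (inv_pow_le (by norm_num) hD0 (hseg s hs)))
    have tb := taylor2 (g := hK) (g1 := h1) (g2 := h2) (a := Y i0 - Y i) (d := d) (B := 9.5 * (1 / D ^ 3))
      (fun s hs => hasDeriv_hK (hne s hs)) (fun s hs => hasDeriv_h1 (hne s hs))
      (fun s hs => (h2_bd (by linarith [hseg s hs])).trans (inv_pow_le (by norm_num) hD0 (hseg s hs)))
    have e : F i = α i * ((fK (Y i0 - Y i + d) - fK (Y i0 - Y i) - f1 (Y i0 - Y i) * d : ℝ) : ℂ)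
        + β i * ((hK (Y i0 - Y i + d) - hK (Y i0 - Y i) - h1 (Y i0 - Y i) * d : ℝ) : ℂ) := by
      have ex : x - Y i = Y i0 - Y i + d := by rw [hxd]; ring
      simp only [hF, comb, ex]
      push_cast
      ring
    rw [e]
    refine (norm_lin (ha i) (hb i) ta tb).trans (le_of_eq ?_)
    ring

/-- the mid range -/
lemma comb_mid {ι : Type*} {Y : ι → ℝ} (sep : ∀ i j, i ≠ j → 3.1 ≤ |Y i - Y j|) {α β : ι → ℂ} {a b : ℝ}
    (ha : ∀ i, ‖α i‖ ≤ a) (hb : ∀ i, ‖β i‖ ≤ b) (i0 : ι) {x G H : ℝ} (hx : |x - Y i0| ≤ 1.55)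
    (hG : |fK (x - Y i0)| ≤ G) (hH : |hK (x - Y i0)| ≤ H) :
    ‖∑' i, comb α β Y fK hK x i‖ ≤ a * (G + 0.19029) + b * (H + 0.33288) := by
  have a0 : 0 ≤ a := (norm_nonneg _).trans (ha i0)
  have b0 : 0 ≤ b := (norm_nonneg _).trans (hb i0)
  have h := (comb_sum sep ha hb zero_le_one zero_le_one (by norm_num)
      (fun y hy => fK_bd (abs_pos.1 (lt_of_lt_of_le (by norm_num) hy)))
      (fun y hy => hK_bd (abs_pos.1 (lt_of_lt_of_le (by norm_num) hy))) i0 hx).2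
  have n := norm_lin (ha i0) (hb i0) hG hH
  change ‖comb α β Y fK hK x i0‖ ≤ _ at n
  have t : ‖∑' i, comb α β Y fK hK x i‖ ≤ ‖∑' i, comb α β Y fK hK x i - comb α β Y fK hK x i0‖ + ‖comb α β Y fK hK x i0‖ := by
    have := norm_add_le (∑' i, comb α β Y fK hK x i - comb α β Y fK hK x i0) (comb α β Y fK hK x i0)
    rwa [sub_add_cancel] at this
  have e : (3.1 - 1.55 : ℝ) = 1.55 := by norm_num
  rw [e] at h
  have q1 : Zs 1 1.55 + Zs 1 3.1 ≤ 0.19029 := by linarith [Z1_155, Z1_31]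
  have q0 : Zs 0 1.55 + Zs 0 3.1 ≤ 0.33288 := by linarith [Z0_155, Z0_31]
  have p1 := mul_le_mul_of_nonneg_left q1 a0
  have p0 := mul_le_mul_of_nonneg_left q0 b0
  linarith

lemma hK_le {x : ℝ} (hx : |x| ≤ 1.55) : |hK x| ≤ 1.55 := by
  have e : hK x = x * fK x := rfl
  rw [e, abs_mul, abs_of_nonneg (fK_nonneg x)]
  nlinarith [fK_le_one x, fK_nonneg x, abs_nonneg x]

/-- interpolating function for the sign pattern -/
lemma dual1 {R : ℕ} {Y : Fin R × ℤ → ℝ} (sep : ∀ i j, i ≠ j → 3.1 ≤ |Y i - Y j|) (v : Fin R → ℂ)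
    (hv : ∀ j, ‖v j‖ = 1) : ∃ (α β : Fin R → ℂ) (q : ℝ → ℂ),
    (∀ x, HasSum (comb (fun i : Fin R × ℤ => α i.1) (fun i => β i.1) Y fK hK x) (q x)) ∧
    (∀ j, q (Y (j, 0)) = v j) ∧
    (∀ j d, |d| ≤ 0.75 → ‖q (Y (j, 0) + d)‖ ≤ 1 - 0.1 * d ^ 2) ∧
    (∀ x, (∀ i, 0.75 ≤ |x - Y i|) → ‖q x‖ ≤ 0.99) := by
  obtain ⟨α, β, a, b, a0, b0, ha, hb, e0, e1, hav, ea, eb⟩ := solve sep v 0 zero_le_one le_rfl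
    (fun j => (hv j).le) (fun j => by simp)
  have ba : a ≤ 1.0321 := by linarith
  have bb : b ≤ 0.0811 := by linarith
  have ha' : ∀ i : Fin R × ℤ, ‖α i.1‖ ≤ a := fun i => ha i.1
  have hb' : ∀ i : Fin R × ℤ, ‖β i.1‖ ≤ b := fun i => hb i.1
  refine ⟨α, β, _, fun x => (comb_summable sep ha' hb' x).hasSum, e0, ?_, ?_⟩
  · intro j d hd
    have h := comb_near sep ha' hb' (j, 0) hd
    rw [e0, e1] at h
    simp only [Pi.zero_apply, zero_mul, sub_zero] at h
    set q := ∑' i, comb (fun i : Fin R × ℤ => α i.1) (fun i => β i.1) Y fK hK (Y (j, 0) + d) i with hq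
    have e : q = (q - v j - (α j * ((fK d - 1 : ℝ) : ℂ) + β j * ((hK d - d : ℝ) : ℂ))) + (v j * (fK d : ℂ)
        + ((α j - v j) * ((fK d - 1 : ℝ) : ℂ) + β j * ((hK d - d : ℝ) : ℂ))) := by
      push_cast; ring
    have n1 : ‖v j * (fK d : ℂ)‖ = fK d := by
      rw [norm_mul, hv, one_mul, Complex.norm_real, Real.norm_eq_abs, abs_of_nonneg (fK_nonneg d)]
    have hf : |fK d - 1| ≤ 2 / 3 * d ^ 2 := by
      rw [abs_le]; constructor <;> nlinarith [fK_lb d, fK_le_one d, sq_nonneg d]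
    have n2 := norm_lin (hav j) (hb j) hf (hK_sub hd)
    have t := norm_add_le (q - v j - (α j * ((fK d - 1 : ℝ) : ℂ) + β j * ((hK d - d : ℝ) : ℂ))) (v j * (fK d : ℂ)
        + ((α j - v j) * ((fK d - 1 : ℝ) : ℂ) + β j * ((hK d - d : ℝ) : ℂ)))
    rw [← e] at t
    have t2 := norm_add_le (v j * (fK d : ℂ)) ((α j - v j) * ((fK d - 1 : ℝ) : ℂ) + β j * ((hK d - d : ℝ) : ℂ))
    have := fK_near hd
    have s := sq_nonneg d
    have m1 := mul_le_mul_of_nonneg_right ba s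
    have m2 := mul_le_mul_of_nonneg_right bb s
    rw [n1] at t2
    linarith
  · intro x hx
    by_cases h : ∃ i, |x - Y i| ≤ 1.55
    · obtain ⟨i, hi⟩ := h
      have g := fK_mid (hx i) hi
      have := comb_mid sep ha' hb' i hi (G := 0.6825) (by rwa [abs_of_nonneg (fK_nonneg _)]) (hK_mid (hx i) hi)
      refine this.trans ?_
      linarith
    · push Not at h
      have := comb_far sep a0 b0 ha' hb' x (fun i => (h i).le)
      refine this.trans ?_
      nlinarith [Z1_155, Z0_155]

/-- interpolating function with prescribed values and derivatives -/
lemma dual2 {R : ℕ} {Y : Fin R × ℤ → ℝ} (sep : ∀ i j, i ≠ j → 3.1 ≤ |Y i - Y j|) (v w : Fin R → ℂ)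
    (hv : ∀ j, ‖v j‖ ≤ 1) (hw : ∀ j, ‖w j‖ ≤ 4) : ∃ (α β : Fin R → ℂ) (q : ℝ → ℂ),
    (∀ x, HasSum (comb (fun i : Fin R × ℤ => α i.1) (fun i => β i.1) Y fK hK x) (q x)) ∧
    (∀ j, q (Y (j, 0)) = v j) ∧
    (∀ j d, |d| ≤ 0.75 → ‖q (Y (j, 0) + d) - v j - w j * d‖ ≤ 20 * d ^ 2) ∧
    (∀ x, ‖q x‖ ≤ 20) := by
  obtain ⟨α, β, a, b, a0, b0, ha, hb, e0, e1, hav, ea, eb⟩ := solve sep v w zero_le_one (by norm_num : (0 : ℝ) ≤ 4)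
    hv hw
  have ba : a ≤ 6 := by linarith
  have bb : b ≤ 6 := by linarith
  have ha' : ∀ i : Fin R × ℤ, ‖α i.1‖ ≤ a := fun i => ha i.1
  have hb' : ∀ i : Fin R × ℤ, ‖β i.1‖ ≤ b := fun i => hb i.1
  refine ⟨α, β, _, fun x => (comb_summable sep ha' hb' x).hasSum, e0, ?_, ?_⟩
  · intro j d hd
    have h := comb_near sep ha' hb' (j, 0) hd
    rw [e0, e1] at h
    set q := ∑' i, comb (fun i : Fin R × ℤ => α i.1) (fun i => β i.1) Y fK hK (Y (j, 0) + d) i with hq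
    have hf : |fK d - 1| ≤ 2 / 3 * d ^ 2 := by
      rw [abs_le]; constructor <;> nlinarith [fK_lb d, fK_le_one d, sq_nonneg d]
    have n2 := norm_lin (ha j) (hb j) hf (hK_sub hd)
    have t := norm_add_le (q - v j - w j * d - (α j * ((fK d - 1 : ℝ) : ℂ) + β j * ((hK d - d : ℝ) : ℂ)))
      (α j * ((fK d - 1 : ℝ) : ℂ) + β j * ((hK d - d : ℝ) : ℂ))
    rw [sub_add_cancel] at t
    have s := sq_nonneg d
    have m1 := mul_le_mul_of_nonneg_right ba s
    have m2 := mul_le_mul_of_nonneg_right bb s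
    linarith
  · intro x
    by_cases h : ∃ i, |x - Y i| ≤ 1.55
    · obtain ⟨i, hi⟩ := h
      have := comb_mid sep ha' hb' i hi (G := 1) (by rw [abs_of_nonneg (fK_nonneg _)]; exact fK_le_one _) (hK_le hi)
      refine this.trans ?_
      linarith
    · push Not at h
      have := comb_far sep a0 b0 ha' hb' x (fun i => (h i).le)
      refine this.trans ?_
      nlinarith [Z1_155, Z0_155]
end

open scoped Real
open Complex

noncomputable section

lemma distT_eq (t : ℝ) : distT t = |t - round t| := by
  apply le_antisymm
  · exact ciInf_le ⟨0, by rintro _ ⟨n, rfl⟩; exact abs_nonneg _⟩ (round t)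
  · exact le_ciInf fun n => round_le t n

lemma distT_le (t : ℝ) (n : ℤ) : distT t ≤ |t - n| :=
  ciInf_le ⟨0, by rintro _ ⟨n, rfl⟩; exact abs_nonneg _⟩ n

lemma distT_nonneg (t : ℝ) : 0 ≤ distT t := by rw [distT_eq]; exact abs_nonneg _

lemma distT_tri (x y z : ℝ) : distT (x - y) ≤ distT (x - z) + distT (y - z) := by
  rw [distT_eq (x - z), distT_eq (y - z)]
  refine (distT_le _ (round (x - z) - round (y - z))).trans ?_
  have e : x - y - ((round (x - z) - round (y - z) : ℤ) : ℝ) = (x - z - round (x - z)) - (y - z - round (y - z)) := by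
    push_cast; ring
  rw [e]
  exact abs_sub _ _

lemma norm2_eq {n : ℕ} (y : Fin n → ℂ) : norm2 y = ‖WithLp.toLp 2 y‖ := by
  rw [EuclideanSpace.norm_eq]; rfl

lemma norm2_two {n : ℕ} {x y z : Fin n → ℂ} {ε : ℝ} (h1 : norm2 z ≤ ε) (h2 : norm2 (x + z - y) ≤ ε) :
    norm2 (x - y) ≤ 2 * ε := by
  have e : x - y = (x + z - y) - z := by abel
  rw [norm2_eq] at *
  rw [e, WithLp.toLp_sub]
  exact (norm_sub_le _ _).trans (by linarith)

lemma TP_poly {d M : ℕ} (hM : 2 * d < M) {Q : ℝ → ℂ} (hQ : Q ∈ TP d) : ∃ c : Fin M → ℂ, ∀ t : ℝ,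
    Q t * Complex.exp (-2 * π * Complex.I * d * t) = ∑ k, c k * Complex.exp (-2 * π * Complex.I * (k : ℕ) * t) := by
  induction hQ using Submodule.span_induction with
  | mem x hx =>
    obtain ⟨m, ⟨h1, h2⟩, rfl⟩ := hx
    have hk : ((d : ℤ) - m).toNat < M := by omega
    refine ⟨Pi.single ⟨((d : ℤ) - m).toNat, hk⟩ 1, fun t => ?_⟩
    rw [Finset.sum_eq_single ⟨((d : ℤ) - m).toNat, hk⟩]
    · rw [Pi.single_eq_same, one_mul, ee, ← Complex.exp_add]
      congr 1
      have : ((((d : ℤ) - m).toNat : ℕ) : ℂ) = (d : ℂ) - m := by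
        have h : ((((d : ℤ) - m).toNat : ℕ) : ℤ) = (d : ℤ) - m := Int.toNat_of_nonneg (by omega)
        have h' := congrArg (fun z : ℤ => (z : ℂ)) h
        push_cast at h'
        exact h'
      simp only [this]
      ring
    · intro b _ hb
      rw [Pi.single_eq_of_ne hb, zero_mul]
    · simp
  | zero => exact ⟨0, by simp⟩
  | add x y _ _ hx hy =>
    obtain ⟨c, hc⟩ := hx
    obtain ⟨c', hc'⟩ := hy
    refine ⟨c + c', fun t => ?_⟩
    rw [Pi.add_apply, add_mul, hc, hc', ← Finset.sum_add_distrib]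
    exact Finset.sum_congr rfl fun k _ => by rw [Pi.add_apply]; ring
  | smul a x _ hx =>
    obtain ⟨c, hc⟩ := hx
    refine ⟨a • c, fun t => ?_⟩
    rw [Pi.smul_apply, smul_eq_mul, mul_assoc, hc, Finset.mul_sum]
    exact Finset.sum_congr rfl fun k _ => by rw [Pi.smul_apply, smul_eq_mul]; ring

lemma exp_orth {M : ℕ} (hM : 0 < M) (k k' : Fin M) :
    ∑ l ∈ Finset.range M, Complex.exp (-2 * π * Complex.I * (k : ℕ) * ((l / M : ℝ) : ℂ)) *
      (starRingEnd ℂ) (Complex.exp (-2 * π * Complex.I * (k' : ℕ) * ((l / M : ℝ) : ℂ))) = if k = k' then (M : ℂ) else 0 := by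
  have hM0 : (M : ℂ) ≠ 0 := by exact_mod_cast hM.ne'
  set z : ℂ := Complex.exp (2 * π * Complex.I * (((k' : ℕ) : ℂ) - (k : ℕ)) / M) with hz
  have e : ∀ l : ℕ, Complex.exp (-2 * π * Complex.I * (k : ℕ) * ((l / M : ℝ) : ℂ)) *
      (starRingEnd ℂ) (Complex.exp (-2 * π * Complex.I * (k' : ℕ) * ((l / M : ℝ) : ℂ))) = z ^ l := by
    intro l
    rw [← Complex.exp_conj, hz, ← Complex.exp_nat_mul, ← Complex.exp_add]
    congr 1
    simp only [map_mul, map_neg, Complex.conj_I, Complex.conj_ofReal, map_ofNat, map_natCast]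
    push_cast
    field_simp
    ring
  simp only [e]
  split_ifs with h
  · subst h
    simp [hz]
  · have hz1 : z ≠ 1 := by
      intro h1
      rw [hz, Complex.exp_eq_one_iff] at h1
      obtain ⟨n, hn⟩ := h1
      have h2 : (((k' : ℕ) : ℂ) - (k : ℕ)) = n * M := by
        have := Complex.two_pi_I_ne_zero
        rw [div_eq_iff hM0] at hn
        have h3 : (2 * π * Complex.I) * (((k' : ℕ) : ℂ) - (k : ℕ)) = (2 * π * Complex.I) * (n * M) := by
          rw [hn]; ring
        exact mul_left_cancel₀ this h3
      have h4 : ((k' : ℕ) : ℤ) - ((k : ℕ) : ℤ) = n * M := by exact_mod_cast h2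
      have a := k.2
      have b := k'.2
      apply h
      have hn0 : n = 0 := by
        by_contra hne
        rcases lt_or_gt_of_ne hne with hlt | hgt
        · have : n * (M : ℤ) ≤ -1 * M := mul_le_mul_of_nonneg_right (by omega) (by omega)
          omega
        · have : 1 * (M : ℤ) ≤ n * M := mul_le_mul_of_nonneg_right (by omega) (by omega)
          omega
      rw [hn0] at h4
      ext
      omega
    have hzM : z ^ M = 1 := by
      rw [hz, ← Complex.exp_nat_mul, Complex.exp_eq_one_iff]
      refine ⟨(k' : ℕ) - (k : ℕ), ?_⟩
      push_cast
      field_simp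
    have := geom_sum_mul z M
    rw [hzM, sub_self] at this
    exact (mul_eq_zero.1 this).resolve_right (sub_ne_zero.2 hz1)

lemma parseval {M : ℕ} (hM : 0 < M) (c : Fin M → ℂ) {C : ℝ} (hC : 0 ≤ C)
    (h : ∀ t : ℝ, ‖∑ k, c k * Complex.exp (-2 * π * Complex.I * (k : ℕ) * t)‖ ≤ C) : norm2 c ≤ C := by
  have hM0 : (0 : ℝ) < M := by exact_mod_cast hM
  set P : ℝ → ℂ := fun t => ∑ k, c k * Complex.exp (-2 * π * Complex.I * (k : ℕ) * t) with hP
  have key : ∑ l ∈ Finset.range M, ‖P (l / M)‖ ^ 2 = M * ∑ k, ‖c k‖ ^ 2 := by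
    have : ((∑ l ∈ Finset.range M, ‖P (l / M)‖ ^ 2 : ℝ) : ℂ) = ((M * ∑ k, ‖c k‖ ^ 2 : ℝ) : ℂ) := by
      push_cast
      calc _ = ∑ l ∈ Finset.range M, ∑ k, ∑ k', c k * (starRingEnd ℂ) (c k') *
            (Complex.exp (-2 * π * Complex.I * (k : ℕ) * ((l / M : ℝ) : ℂ)) *
      (starRingEnd ℂ) (Complex.exp (-2 * π * Complex.I * (k' : ℕ) * ((l / M : ℝ) : ℂ)))) := by
            apply Finset.sum_congr rfl
            intro l _
            rw [← Complex.mul_conj', hP, map_sum, Finset.sum_mul_sum]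
            apply Finset.sum_congr rfl
            intro k _
            apply Finset.sum_congr rfl
            intro k' _
            rw [map_mul]
            ring
        _ = ∑ k, ∑ k', c k * (starRingEnd ℂ) (c k') * (if k = k' then (M : ℂ) else 0) := by
            rw [Finset.sum_comm]
            apply Finset.sum_congr rfl
            intro k _
            rw [Finset.sum_comm]
            apply Finset.sum_congr rfl
            intro k' _
            rw [← Finset.mul_sum, exp_orth hM]
        _ = _ := by
            rw [Finset.mul_sum]
            apply Finset.sum_congr rfl
            intro k _
            simp only [mul_ite, mul_zero, Finset.sum_ite_eq, Finset.mem_univ, if_true]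
            rw [Complex.mul_conj']
            ring
    exact_mod_cast this
  have h2 : ∑ l ∈ Finset.range M, ‖P (l / M)‖ ^ 2 ≤ M * C ^ 2 := by
    calc _ ≤ ∑ l ∈ Finset.range M, C ^ 2 := by
          apply Finset.sum_le_sum
          intro l _
          exact pow_le_pow_left₀ (norm_nonneg _) (h _) 2
      _ = _ := by simp
  rw [key] at h2
  have h3 := le_of_mul_le_mul_left h2 hM0
  rw [norm2]
  exact Real.sqrt_le_iff.2 ⟨hC, h3⟩

lemma pairing {d M R S : ℕ} (hM : 2 * d < M) {Q : ℝ → ℂ} (hQ : Q ∈ TP d) {C : ℝ} (hC : ∀ t, ‖Q t‖ ≤ C)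
    (p : ℝ → ℂ) (hp : ∀ t : ℝ, p t = Q t * Complex.exp (-2 * π * Complex.I * d * t))
    (a : Fin R → ℂ) (t : Fin R → ℝ) (b : Fin S → ℂ) (s : Fin S → ℝ) :
    ‖∑ j, a j * p (t j) - ∑ k, b k * p (s k)‖ ≤ C * norm2 (fourierCoeffs M a t - fourierCoeffs M b s) := by
  obtain ⟨c, hc⟩ := TP_poly hM hQ
  have C0 : 0 ≤ C := (norm_nonneg _).trans (hC 0)
  have nexp : ∀ t : ℝ, ‖Complex.exp (-2 * π * Complex.I * d * t)‖ = 1 := by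
    intro t
    have : (-2 * π * Complex.I * d * t : ℂ) = ((-2 * π * d * t : ℝ) : ℂ) * Complex.I := by push_cast; ring
    rw [this, Complex.norm_exp_ofReal_mul_I]
  have hn : norm2 c ≤ C := by
    apply parseval (by omega) c C0
    intro t
    rw [← hc, norm_mul, nexp, mul_one]
    exact hC t
  have four : ∀ {R : ℕ} (a : Fin R → ℂ) (t : Fin R → ℝ), ∑ j, a j * p (t j) = ∑ k, c k * fourierCoeffs M a t k := by
    intro R a t
    simp only [hp, hc, fourierCoeffs, Finset.mul_sum]
    rw [Finset.sum_comm]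
    exact Finset.sum_congr rfl fun k _ => Finset.sum_congr rfl fun j _ => by ring
  rw [four, four, ← Finset.sum_sub_distrib]
  have e : ∀ k, c k * fourierCoeffs M a t k - c k * fourierCoeffs M b s k =
      c k * (fourierCoeffs M a t - fourierCoeffs M b s) k := fun k => by rw [Pi.sub_apply]; ring
  simp only [e]
  generalize fourierCoeffs M a t - fourierCoeffs M b s = D
  calc ‖∑ k, c k * D k‖ ≤ ∑ k, ‖c k‖ * ‖D k‖ := by
        refine (norm_sum_le _ _).trans (le_of_eq ?_)
        exact Finset.sum_congr rfl fun k _ => norm_mul _ _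
    _ ≤ norm2 c * norm2 D := Real.sum_mul_le_sqrt_mul_sqrt _ _ _
    _ ≤ _ := mul_le_mul_of_nonneg_right hn (Real.sqrt_nonneg _)

/-- nodes after rescaling -/
def nodes {R : ℕ} (N : ℕ) (t : Fin R → ℝ) : Fin R × ℤ → ℝ := fun i => π * N * (t i.1 + i.2)

lemma nodes_sep {R N M : ℕ} (t : Fin R → ℝ) (hM : 257 ≤ M) (hN : N = (M - 1) / 4)
    (hs : ∀ j k, j ≠ k → 4 / ((M : ℝ) - 1) ≤ distT (t j - t k)) :
    ∀ i j, i ≠ j → 3.1 ≤ |nodes N t i - nodes N t j| := by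
  rintro ⟨j, m⟩ ⟨j', m'⟩ hne
  have hN4 : (M : ℝ) - 1 ≤ 4 * N + 3 := by
    have : M ≤ 4 * N + 4 := by omega
    have : (M : ℝ) ≤ 4 * N + 4 := by exact_mod_cast this
    linarith
  have hM' : (257 : ℝ) ≤ M := by exact_mod_cast hM
  have hpi := Real.pi_gt_d2
  have e : nodes N t (j, m) - nodes N t (j', m') = π * N * (t j - t j' - ((m' - m : ℤ) : ℝ)) := by
    simp only [nodes]; push_cast; ring
  have hN0 : (63 : ℝ) ≤ N := by linarith
  rw [e, abs_mul, abs_of_nonneg (by positivity)]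
  by_cases h : j = j'
  · subst h
    have hmm : m' - m ≠ 0 := by
      intro h0
      apply hne
      have : m' = m := by omega
      rw [this]
    have : (1 : ℝ) ≤ |t j - t j - ((m' - m : ℤ) : ℝ)| := by
      rw [sub_self, zero_sub, abs_neg]
      exact_mod_cast Int.one_le_abs hmm
    have : 3.14 * 63 * 1 ≤ π * N * |t j - t j - ((m' - m : ℤ) : ℝ)| := by gcongr
    refine le_trans ?_ this
    norm_num
  · have h1 := (hs j j' h).trans (distT_le _ (m' - m))
    have h2 : 3.14 * (((M : ℝ) - 1 - 3) / 4) * (4 / ((M : ℝ) - 1)) ≤ π * N * |t j - t j' - ((m' - m : ℤ) : ℝ)| := by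
      have : 0 < 4 / ((M : ℝ) - 1) := by apply div_pos <;> linarith
      gcongr <;> linarith
    refine le_trans ?_ h2
    have hL : 0 < (M : ℝ) - 1 := by linarith
    have e : 3.14 * (((M : ℝ) - 1 - 3) / 4) * (4 / ((M : ℝ) - 1)) = 3.14 * ((M : ℝ) - 1 - 3) / ((M : ℝ) - 1) := by
      field_simp
    rw [e, le_div_iff₀ hL]
    linarith

lemma q_mem {R N : ℕ} (hN : 1 ≤ N) (t : Fin R → ℝ) (α β : Fin R → ℂ) (q : ℝ → ℂ)
    (hq : ∀ x, HasSum (comb (fun i : Fin R × ℤ => α i.1) (fun i => β i.1) (nodes N t) fK hK x) (q x)) :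
    (fun x : ℝ => q (π * N * x)) ∈ TP (2 * N) := by
  obtain ⟨K, H, hK1, hH1, hK2, hH2⟩ := kernel_trig N hN
  have e : (fun x : ℝ => q (π * N * x)) = ∑ j, (α j • (fun x : ℝ => ((K (x - t j) : ℝ) : ℂ))
      + β j • (fun x : ℝ => ((H (x - t j) : ℝ) : ℂ))) := by
    ext x
    have h := (hq (π * N * x)).prod_fiberwise (g := fun j => α j * ((K (x - t j) : ℝ) : ℂ) + β j * ((H (x - t j) : ℝ) : ℂ)) ?_
    · rw [h.unique (hasSum_fintype _)]
      simp
    · intro j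
      have a := ((Complex.hasSum_ofReal.2 (hK2 (x - t j))).mul_left (α j)).add
        ((Complex.hasSum_ofReal.2 (hH2 (x - t j))).mul_left (β j))
      have ef : (fun m : ℤ => comb (fun i : Fin R × ℤ => α i.1) (fun i => β i.1) (nodes N t) fK hK (π * N * x) (j, m)) =
          fun m : ℤ => α j * ((fK (π * N * (x - t j - m)) : ℝ) : ℂ) + β j * ((hK (π * N * (x - t j - m)) : ℝ) : ℂ) := by
        ext m
        have : π * N * x - nodes N t (j, m) = π * N * (x - t j - m) := by simp only [nodes]; ring
        simp only [comb, this]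
      rw [ef]
      exact a
  rw [e]
  apply Submodule.sum_mem
  intro j _
  exact Submodule.add_mem _ (Submodule.smul_mem _ _ (TP_shift hK1 (t j))) (Submodule.smul_mem _ _ (TP_shift hH1 (t j)))
end

open scoped Real
open Complex
noncomputable section

/-- the phase factor -/
def ph (N : ℕ) (s : ℝ) : ℂ := Complex.exp (-2 * π * Complex.I * ((2 * N : ℕ) : ℂ) * s)

lemma ph_eq (N : ℕ) (s : ℝ) : ph N s = Complex.exp (((-(4 * (π * N * s)) : ℝ) : ℂ) * Complex.I) := by
  unfold ph; congr 1; push_cast; ring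

lemma ph_norm (N : ℕ) (s : ℝ) : ‖ph N s‖ = 1 := by
  rw [ph_eq, Complex.norm_exp_ofReal_mul_I]

lemma ph_int (N : ℕ) (s : ℝ) (n : ℤ) : ph N (s + n) = ph N s := by
  unfold ph
  rw [Complex.exp_eq_exp_iff_exists_int]
  exact ⟨-(2 * N * n), by push_cast; ring⟩

lemma loc (N : ℕ) (t s : ℝ) : ∃ n : ℤ, |π * N * (s + n - t)| = π * N * distT (t - s) := by
  refine ⟨round (t - s), ?_⟩
  rw [distT_eq, abs_mul, abs_of_nonneg (by positivity), ← abs_neg]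
  congr 2; ring

lemma dualA {R N M : ℕ} (t : Fin R → ℝ) (hM : 257 ≤ M) (hN : N = (M - 1) / 4)
    (hs : ∀ j k, j ≠ k → 4 / ((M : ℝ) - 1) ≤ distT (t j - t k)) (v : Fin R → ℂ) (hv : ∀ j, ‖v j‖ = 1) :
    ∃ p : ℝ → ℂ, (∀ j, p (t j) = v j) ∧
      (∀ j s, π * N * distT (t j - s) ≤ 0.75 → ‖p s‖ ≤ 1 - 0.1 * (π * N * distT (t j - s)) ^ 2) ∧
      (∀ s, (∀ j, 0.75 ≤ π * N * distT (t j - s)) → ‖p s‖ ≤ 0.99) ∧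
      (∀ (a : Fin R → ℂ) (S : ℕ) (b : Fin S → ℂ) (s : Fin S → ℝ),
        ‖∑ j, a j * p (t j) - ∑ k, b k * p (s k)‖ ≤ norm2 (fourierCoeffs M a t - fourierCoeffs M b s)) := by
  obtain ⟨α, β, q, hq, e, h1, h2⟩ := dual1 (nodes_sep t hM hN hs) (fun j => v j * (ph N (t j))⁻¹)
    (fun j => by rw [norm_mul, norm_inv, ph_norm, hv]; simp)
  have hQ := q_mem (by omega) t α β q hq
  have per : ∀ (x : ℝ) (n : ℤ), q (π * N * (x + n)) = q (π * N * x) := TP_periodic hQ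
  have H1 : ∀ j s, π * N * distT (t j - s) ≤ 0.75 →
      ‖q (π * N * s)‖ ≤ 1 - 0.1 * (π * N * distT (t j - s)) ^ 2 := by
    intro j s h
    obtain ⟨n, hn⟩ := loc N (t j) s
    have := h1 j (π * N * (s + n - t j)) (by rw [hn]; exact h)
    rw [← per s n, ← hn, sq_abs]
    convert this using 3
    simp only [nodes]; push_cast; ring_nf
  have H2 : ∀ s, (∀ j, 0.75 ≤ π * N * distT (t j - s)) → ‖q (π * N * s)‖ ≤ 0.99 := by
    intro s h
    refine h2 _ ?_
    rintro ⟨j, m⟩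
    refine (h j).trans ?_
    have : π * N * s - nodes N t (j, m) = -(π * N * (t j - s - (-m : ℤ))) := by
      simp only [nodes]; push_cast; ring
    rw [this, abs_neg, abs_mul, abs_of_nonneg (by positivity)]
    gcongr
    exact distT_le _ _
  have H3 : ∀ s, ‖q (π * N * s)‖ ≤ 1 := by
    intro s
    by_cases h : ∀ j, 0.75 ≤ π * N * distT (t j - s)
    · exact (H2 s h).trans (by norm_num)
    · push Not at h
      obtain ⟨j, hj⟩ := h
      refine (H1 j s hj.le).trans ?_
      have := sq_nonneg (π * N * distT (t j - s))
      linarith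
  refine ⟨fun s => q (π * N * s) * ph N s, ?_, ?_, ?_, ?_⟩
  · intro j
    have : π * N * t j = nodes N t (j, 0) := by simp [nodes]
    have h0 : ph N (t j) ≠ 0 := by rw [← norm_ne_zero_iff, ph_norm]; norm_num
    simp only [this, e]
    field_simp
  · intro j s h
    rw [norm_mul, ph_norm, mul_one]; exact H1 j s h
  · intro s h
    rw [norm_mul, ph_norm, mul_one]; exact H2 s h
  · intro a S b s
    have := pairing (C := 1) (by omega : 2 * (2 * N) < M) hQ H3 (fun s => q (π * N * s) * ph N s) (fun _ => rfl) a t b s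
    rwa [one_mul] at this

lemma exp_quad (x : ℝ) : ‖Complex.exp (x * Complex.I) - 1 - x * Complex.I‖ ≤ 2 * x ^ 2 := by
  have n : ‖(x * Complex.I : ℂ)‖ = |x| := by simp
  by_cases h : |x| ≤ 1
  · have := Complex.norm_exp_sub_one_sub_id_le (x := x * Complex.I) (by rw [n]; exact h)
    rw [n, sq_abs] at this
    nlinarith [sq_nonneg x]
  · push Not at h
    refine (norm_sub_le _ _).trans ?_
    have h1 : ‖Complex.exp (x * Complex.I) - 1‖ ≤ |x| := by
      have := Real.norm_exp_I_mul_ofReal_sub_one_le (x := x)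
      rwa [mul_comm, Real.norm_eq_abs] at this
    rw [n, ← sq_abs x]
    nlinarith

lemma dualB {R N M : ℕ} (t : Fin R → ℝ) (hM : 257 ≤ M) (hN : N = (M - 1) / 4)
    (hs : ∀ j k, j ≠ k → 4 / ((M : ℝ) - 1) ≤ distT (t j - t k)) (j0 : Fin R) :
    ∃ p : ℝ → ℂ, (∀ j, p (t j) = if j = j0 then 1 else 0) ∧
      (∀ j s, π * N * distT (t j - s) ≤ 0.75 →
        ‖p s - if j = j0 then 1 else 0‖ ≤ 52 * (π * N * distT (t j - s)) ^ 2) ∧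
      (∀ s, ‖p s‖ ≤ 20) ∧
      (∀ (a : Fin R → ℂ) (S : ℕ) (b : Fin S → ℂ) (s : Fin S → ℝ),
        ‖∑ j, a j * p (t j) - ∑ k, b k * p (s k)‖ ≤ 20 * norm2 (fourierCoeffs M a t - fourierCoeffs M b s)) := by
  have h0 : ∀ s, ph N s ≠ 0 := fun s => by rw [← norm_ne_zero_iff, ph_norm]; norm_num
  have nd : ∀ j : Fin R, ‖(if j = j0 then 1 else 0 : ℂ)‖ ≤ 1 := by
    intro j; split_ifs <;> simp
  obtain ⟨α, β, q, hq, e, h1, h2⟩ := dual2 (nodes_sep t hM hN hs)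
    (fun j => (if j = j0 then 1 else 0) * (ph N (t j))⁻¹)
    (fun j => 4 * Complex.I * ((if j = j0 then 1 else 0) * (ph N (t j))⁻¹))
    (fun j => by rw [norm_mul, norm_inv, ph_norm]; simpa using nd j)
    (fun j => by
      rw [norm_mul, norm_mul (if j = j0 then (1 : ℂ) else 0), norm_inv, ph_norm]
      have := nd j
      simp only [norm_mul, Complex.norm_I, inv_one, mul_one]
      norm_num
      linarith)
  have hQ := q_mem (by omega) t α β q hq
  have per : ∀ (x : ℝ) (n : ℤ), q (π * N * (x + n)) = q (π * N * x) := TP_periodic hQ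
  refine ⟨fun s => q (π * N * s) * ph N s, ?_, ?_, ?_, ?_⟩
  · intro j
    have : π * N * t j = nodes N t (j, 0) := by simp [nodes]
    simp only [this, e]
    rw [inv_mul_cancel_right₀ (h0 _)]
  · intro j s h
    obtain ⟨n, hn⟩ := loc N (t j) s
    have := h1 j (π * N * (s + n - t j)) (by rw [hn]; exact h)
    simp only
    rw [← per s n, ← ph_int N s n, ← hn, sq_abs]
    set d := π * N * (s + n - t j) with hd
    have e1 : π * N * (s + n) = nodes N t (j, 0) + d := by simp [nodes, hd]; ring
    have e2 : ph N (s + n) = ph N (t j) * Complex.exp (((-(4 * d) : ℝ) : ℂ) * Complex.I) := by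
      rw [ph_eq, ph_eq, ← Complex.exp_add]; congr 1; rw [hd]; push_cast; ring
    have e3 : ph N (t j) = Complex.exp (((4 * d : ℝ) : ℂ) * Complex.I) * ph N (s + n) := by
      rw [e2, mul_left_comm, ← Complex.exp_add]; push_cast; simp
    rw [e1]
    have nδ := nd j
    generalize (if j = j0 then (1 : ℂ) else 0) = δ at *
    have key : q (nodes N t (j, 0) + d) * ph N (s + n) - δ =
        (q (nodes N t (j, 0) + d) - δ * (ph N (t j))⁻¹ - 4 * Complex.I * (δ * (ph N (t j))⁻¹) * d) * ph N (s + n)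
        - δ * (ph N (t j))⁻¹ * ph N (s + n) * (Complex.exp (((4 * d : ℝ) : ℂ) * Complex.I) - 1 - ((4 * d : ℝ) : ℂ) * Complex.I) := by
      have e4 : Complex.exp (((4 * d : ℝ) : ℂ) * Complex.I) = ph N (t j) * (ph N (s + n))⁻¹ := by
        rw [e3]; field_simp [h0]
      rw [e4]
      have := h0 (t j)
      have := h0 (s + n)
      push_cast
      field_simp
      ring
    rw [key]
    refine (norm_sub_le _ _).trans ?_
    rw [norm_mul _ (ph N (s + n)), norm_mul, norm_mul, norm_mul, norm_inv, ph_norm, ph_norm]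
    have := exp_quad (4 * d)
    simp only [inv_one, mul_one]
    have h3 : ‖δ‖ * ‖Complex.exp (((4 * d : ℝ) : ℂ) * Complex.I) - 1 - ((4 * d : ℝ) : ℂ) * Complex.I‖ ≤ 1 * (2 * (4 * d) ^ 2) := by
      gcongr
    linarith
  · intro s
    rw [norm_mul, ph_norm, mul_one]; exact h2 _
  · intro a S b s
    exact pairing (C := 20) (by omega : 2 * (2 * N) < M) hQ (fun s => h2 _) (fun s => q (π * N * s) * ph N s) (fun _ => rfl) a t b s

end

open scoped Real
open Complex
noncomputable section

lemma main_aux {M R : ℕ} (hM : 257 ≤ M) (hR : 1 ≤ R) (a : Fin R → ℂ) (t : Fin R → ℝ)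
    (hs : ∀ j k, j ≠ k → 4 / ((M : ℝ) - 1) ≤ distT (t j - t k)) {ε : ℝ}
    {S : ℕ} (b : Fin S → ℂ) (s : Fin S → ℝ)
    (hD : norm2 (fourierCoeffs M a t - fourierCoeffs M b s) ≤ 2 * ε) (htv : tvNorm b ≤ tvNorm a) :
    E1 a t b s M ≤ 11000 * ε ∧ E2 a t b s M ≤ 50 * ((M : ℝ) ^ 2)⁻¹ * ε ∧ E3 a t b s M ≤ 500 * ε := by
  classical
  obtain ⟨N, hN⟩ : ∃ N, N = (M - 1) / 4 := ⟨_, rfl⟩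
  have hMr : (257 : ℝ) ≤ M := by exact_mod_cast hM
  have hN4 : (M : ℝ) ≤ 4 * N + 4 := by
    have : M ≤ 4 * N + 4 := by omega
    exact_mod_cast this
  have hN5 : (4 * N : ℝ) ≤ M - 1 := by
    have : 4 * N + 1 ≤ M := by omega
    have : (4 * N + 1 : ℝ) ≤ M := by exact_mod_cast this
    linarith
  have hpi := Real.pi_gt_d4
  have hpi2 := Real.pi_lt_d4
  have hL : 0 < (M : ℝ) - 1 := by linarith
  have hw1 : 0.775 * ((M : ℝ) - 1) ≤ π * N := by nlinarith
  have hw2 : π * N ≤ 0.786 * ((M : ℝ) - 1) := by nlinarith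
  have hw3 : 0.7 * (M : ℝ) ≤ π * N := by linarith
  have hw0 : 0 < π * N := by linarith
  have hε : 0 ≤ ε := by
    have : 0 ≤ norm2 (fourierCoeffs M a t - fourierCoeffs M b s) := Real.sqrt_nonneg _
    linarith
  have near : ∀ j k, k ∈ nearIdx t s M j → π * N * distT (t j - s k) ≤ 0.75 := by
    intro j k hk
    simp only [nearIdx, Finset.mem_filter, Finset.mem_univ, true_and] at hk
    have h1 : π * N * distT (t j - s k) ≤ 0.786 * ((M : ℝ) - 1) * (0.3298 / ((M : ℝ) - 1)) := by
      have := distT_nonneg (t j - s k)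
      gcongr
    refine h1.trans ?_
    have : 0.786 * ((M : ℝ) - 1) * (0.3298 / ((M : ℝ) - 1)) = 0.786 * 0.3298 := by field_simp
    rw [this]; norm_num
  have far : ∀ j k, k ∉ nearIdx t s M j → 0.2 ≤ π * N * distT (t j - s k) := by
    intro j k hk
    simp only [nearIdx, Finset.mem_filter, Finset.mem_univ, true_and, not_le] at hk
    have h1 : 0.775 * ((M : ℝ) - 1) * (0.3298 / ((M : ℝ) - 1)) ≤ π * N * distT (t j - s k) := by
      gcongr
    refine le_trans ?_ h1
    have : 0.775 * ((M : ℝ) - 1) * (0.3298 / ((M : ℝ) - 1)) = 0.775 * 0.3298 := by field_simp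
    rw [this]; norm_num
  have disj : ∀ i j k, k ∈ nearIdx t s M i → k ∈ nearIdx t s M j → i = j := by
    intro i j k hi hj
    by_contra hne
    simp only [nearIdx, Finset.mem_filter, Finset.mem_univ, true_and] at hi hj
    have h1 := hs i j hne
    have h2 := distT_tri (t i) (t j) (s k)
    have h3 : 4 / ((M : ℝ) - 1) ≤ 0.3298 / ((M : ℝ) - 1) + 0.3298 / ((M : ℝ) - 1) := by linarith
    rw [← add_div, div_le_div_iff_of_pos_right hL] at h3
    norm_num at h3
  obtain ⟨v, hv, hav⟩ : ∃ v : Fin R → ℂ, (∀ j, ‖v j‖ = 1) ∧ ∀ j, a j * v j = (‖a j‖ : ℂ) := by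
    have : ∀ j, ∃ v : ℂ, ‖v‖ = 1 ∧ a j * v = (‖a j‖ : ℂ) := by
      intro j
      by_cases h : a j = 0
      · exact ⟨1, by simp, by simp [h]⟩
      · have h' : (‖a j‖ : ℂ) ≠ 0 := by simpa using h
        refine ⟨‖a j‖ / a j, ?_, by field_simp⟩
        rw [norm_div, Complex.norm_real, norm_norm]
        exact div_self (by simpa using h)
    choose v h using this
    exact ⟨v, fun j => (h j).1, fun j => (h j).2⟩
  obtain ⟨p, pt, pn, pf, pp⟩ := dualA t hM hN hs v hv
  have c1 : ∀ j k, k ∈ nearIdx t s M j → 0.1 * (π * N * distT (t j - s k)) ^ 2 ≤ 1 - ‖p (s k)‖ := by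
    intro j k hk
    have := pn j (s k) (near j k hk)
    linarith
  have c2 : ∀ k, (∀ j, k ∉ nearIdx t s M j) → 0.004 ≤ 1 - ‖p (s k)‖ := by
    intro k hk
    by_cases h : ∀ j, 0.75 ≤ π * N * distT (t j - s k)
    · have := pf _ h; linarith
    · push Not at h
      obtain ⟨j, hj⟩ := h
      have h1 := pn j (s k) hj.le
      have h2 := far j k (hk j)
      nlinarith
  have c0 : ∀ k, 0 ≤ 1 - ‖p (s k)‖ := by
    intro k
    by_cases h : ∀ j, k ∉ nearIdx t s M j
    · have := c2 k h; linarith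
    · push Not at h
      obtain ⟨j, hj⟩ := h
      refine le_trans (by positivity) (c1 j k hj)
  have x0 : ∀ k, 0 ≤ ‖b k‖ * (1 - ‖p (s k)‖) := fun k => mul_nonneg (norm_nonneg _) (c0 k)
  have hx : ∑ k, ‖b k‖ * (1 - ‖p (s k)‖) ≤ 2 * ε := by
    have h1 := (pp a S b s).trans hD
    have h2 : ∑ j, a j * p (t j) = ((∑ j, ‖a j‖ : ℝ) : ℂ) := by
      push_cast
      exact Finset.sum_congr rfl fun j _ => by rw [pt, hav]
    have h3 : ‖∑ k, b k * p (s k)‖ ≤ ∑ k, ‖b k‖ * ‖p (s k)‖ :=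
      (norm_sum_le _ _).trans_eq (Finset.sum_congr rfl fun k _ => norm_mul _ _)
    have h4 := norm_sub_norm_le (∑ j, a j * p (t j)) (∑ k, b k * p (s k))
    have h5 : ‖∑ j, a j * p (t j)‖ = ∑ j, ‖a j‖ := by
      rw [h2, Complex.norm_real, Real.norm_of_nonneg (Finset.sum_nonneg fun _ _ => norm_nonneg _)]
    simp only [mul_sub, mul_one, Finset.sum_sub_distrib]
    unfold tvNorm at htv
    linarith
  refine ⟨?_, ?_, ?_⟩
  · have : Nonempty (Fin R) := ⟨⟨0, hR⟩⟩
    refine ciSup_le fun j => ?_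
    obtain ⟨g, gt, gn, gb, gp⟩ := dualB t hM hN hs j
    have h1 := gp a S b s
    have h2 : ∑ i, a i * g (t i) = a j := by simp [gt]
    have h3 : ∑ k ∈ nearIdx t s M j, b k = ∑ k, b k * (if k ∈ nearIdx t s M j then 1 else 0) := by
      simp
    have h4 : a j - ∑ k ∈ nearIdx t s M j, b k = (∑ i, a i * g (t i) - ∑ k, b k * g (s k))
        + ∑ k, b k * (g (s k) - if k ∈ nearIdx t s M j then 1 else 0) := by
      simp only [mul_sub, Finset.sum_sub_distrib]
      rw [h2, h3]; ring
    have h5 : ∀ k, ‖g (s k) - if k ∈ nearIdx t s M j then 1 else 0‖ ≤ 5000 * (1 - ‖p (s k)‖) := by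
      intro k
      by_cases h : ∀ i, k ∉ nearIdx t s M i
      · rw [if_neg (h j), sub_zero]
        have := c2 k h
        have := gb (s k)
        linarith
      · push Not at h
        obtain ⟨i, hi⟩ := h
        have e : (if k ∈ nearIdx t s M j then 1 else 0 : ℂ) = if i = j then 1 else 0 := by
          by_cases hij : i = j
          · subst hij; simp [hi]
          · rw [if_neg hij, if_neg fun hj => hij (disj i j k hi hj)]
        rw [e]
        have h6 := gn i (s k) (near i k hi)
        have h7 := c1 i k hi
        have h8 := sq_nonneg (π * N * distT (t i - s k))
        linarith
    have h6 : ‖∑ k, b k * (g (s k) - if k ∈ nearIdx t s M j then 1 else 0)‖ ≤ 5000 * ∑ k, ‖b k‖ * (1 - ‖p (s k)‖) := by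
      rw [Finset.mul_sum]
      refine (norm_sum_le _ _).trans (Finset.sum_le_sum fun k _ => ?_)
      rw [norm_mul]
      have := mul_le_mul_of_nonneg_left (h5 k) (norm_nonneg (b k))
      linarith
    rw [h4]
    refine (norm_add_le _ _).trans ?_
    linarith
  · have h1 : ∀ j, ∀ k ∈ nearIdx t s M j, ‖b k‖ * distT (t j - s k) ^ 2 ≤ 10 / (π * N) ^ 2 * (‖b k‖ * (1 - ‖p (s k)‖)) := by
      intro j k hk
      have h := mul_le_mul_of_nonneg_left (c1 j k hk) (norm_nonneg (b k))
      rw [div_mul_eq_mul_div, le_div_iff₀ (by positivity)]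
      nlinarith
    have h2 : E2 a t b s M ≤ 10 / (π * N) ^ 2 * ∑ k, ‖b k‖ * (1 - ‖p (s k)‖) := by
      unfold E2
      refine (Finset.sum_le_sum fun j _ => Finset.sum_le_sum (h1 j)).trans ?_
      simp only [← Finset.mul_sum]
      refine mul_le_mul_of_nonneg_left ?_ (by positivity)
      rw [← Finset.sum_biUnion (fun i _ j _ hij => Finset.disjoint_left.2 fun k hi hj => hij (disj i j k hi hj))]
      exact Finset.sum_le_sum_of_subset_of_nonneg (Finset.subset_univ _) fun k _ _ => x0 k
    refine h2.trans ?_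
    have h3 : 10 / (π * N) ^ 2 * ∑ k, ‖b k‖ * (1 - ‖p (s k)‖) ≤ 10 / (0.7 * (M : ℝ)) ^ 2 * (2 * ε) := by
      have := Finset.sum_nonneg fun k (_ : k ∈ Finset.univ) => x0 k
      gcongr
    refine h3.trans ?_
    have e : 10 / (0.7 * (M : ℝ)) ^ 2 * (2 * ε) = 20 / 0.49 * (((M : ℝ) ^ 2)⁻¹ * ε) := by
      have : (M : ℝ) ≠ 0 := by positivity
      field_simp; norm_num; ring
    rw [e, mul_assoc]
    gcongr
    norm_num
  · have h2 : E3 a t b s M ≤ 250 * ∑ k, ‖b k‖ * (1 - ‖p (s k)‖) := by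
      unfold E3
      rw [Finset.mul_sum]
      refine le_trans (Finset.sum_le_sum fun k hk => ?_) (Finset.sum_le_sum_of_subset_of_nonneg (Finset.subset_univ (farIdx t s M)) fun k _ _ => mul_nonneg (by norm_num) (x0 k))
      simp only [farIdx, Finset.mem_filter, Finset.mem_univ, true_and] at hk
      have := mul_le_mul_of_nonneg_left (c2 k hk) (norm_nonneg (b k))
      linarith
    linarith

end

/-- robustness of TV-min/BLASSO, Fernandez-Granda / Azaïs et al.:
there are universal constants `C₁, C₂, C₃ > 0` such that for `M ≥ 257`,
`Δ ≥ 4/(M-1)`, `Δ`-separated `μ`, noisy data `y = 𝓕_M μ + z` with `‖z‖ ≤ ε`, and any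
atomic `ν` with `‖y - 𝓕_M ν‖ ≤ ε` and `‖ν‖_TV ≤ ‖μ‖_TV`, the errors satisfy
`𝓔_1^M ≤ C₁ ε`, `𝓔_2^M ≤ C₂ M⁻² ε`, `𝓔_3^M ≤ C₃ ε`. -/
theorem statement12 :
    ∃ C₁ C₂ C₃ : ℝ, 0 < C₁ ∧ 0 < C₂ ∧ 0 < C₃ ∧
      ∀ (M : ℕ), 257 ≤ M →
      ∀ (Δ : ℝ), 4 / ((M : ℝ) - 1) ≤ Δ →
      ∀ (R : ℕ), 1 ≤ R →
      ∀ (a : Fin R → ℂ) (t : Fin R → ℝ),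
        (∀ j, t j ∈ Set.Ico (0 : ℝ) 1) → Function.Injective t →
        (∀ j k, j ≠ k → Δ ≤ distT (t j - t k)) →
      ∀ (ε : ℝ), 0 < ε →
      ∀ (z : Fin M → ℂ), norm2 z ≤ ε →
      ∀ (S : ℕ) (b : Fin S → ℂ) (s : Fin S → ℝ),
        (∀ k, s k ∈ Set.Ico (0 : ℝ) 1) → Function.Injective s →
        norm2 (fourierCoeffs M a t + z - fourierCoeffs M b s) ≤ ε →
        tvNorm b ≤ tvNorm a →
        E1 a t b s M ≤ C₁ * ε ∧
        E2 a t b s M ≤ C₂ * ((M : ℝ) ^ 2)⁻¹ * ε ∧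
        E3 a t b s M ≤ C₃ * ε := by
  refine ⟨11000, 50, 500, by norm_num, by norm_num, by norm_num, ?_⟩
  intro M hM Δ hΔ R hR a t _ _ hs ε _ z hz S b s _ _ hy htv
  exact main_aux hM hR a t (fun j k h => hΔ.trans (hs j k h)) b s (norm2_two hz hy) htv
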